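/- arXiv:1507.03426 — 2 statements merged into one kernel-verified Lean document; each statement's English description precedes it below -/
import Mathlib

section
/- For i ∈ {1,2}, every n ∈ ℕ, and every z ∈ ℂ with z ∉ {0, 1, -1}, one has the matrix-valued Askey–Wilson type q-difference equation M_i(z)·P_n(μ(qz)) + M_i(z⁻¹)·P_n(μ(q⁻¹z)) = P_n(μ(z))·Λ_n(i), where μ(w) = (w + w⁻¹)/2. -/
open Finset Polynomial MeasureTheory Matrix
open scoped BigOperators ComplexOrder

noncomputable section

/-- q-shifted factorial `(a;p)_n`. -/
def qp (a p : ℂ) (n : ℕ) : ℂ := ∏ j ∈ Finset.range n, (1 - a * p ^ j)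

/-- q-Racah polynomial `R_n(μ(x);α,β,γ,δ;p)`. -/
def qRacah (p α β γ δ : ℂ) (n x : ℕ) : ℂ :=
  ∑ k ∈ Finset.range (min n x + 1),
    qp (p ^ (-(n : ℤ))) p k * qp (α * β * p ^ (n + 1)) p k *
        qp (p ^ (-(x : ℤ))) p k * qp (γ * δ * p ^ (x + 1)) p k /
      (qp (α * p) p k * qp (β * δ * p) p k * qp (γ * p) p k * qp p p k) * p ^ k

/-- `IsUltra C` says that for each base `p`, parameter `β` and degree `n`, `C p β n` is
the continuous q-ultraspherical polynomial: it has degree at most `n` and its values at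
`(z+z⁻¹)/2` are given by the symmetric Laurent sum. -/
def IsUltra (C : ℂ → ℂ → ℕ → Polynomial ℂ) : Prop :=
  ∀ (p β : ℂ) (n : ℕ),
    (C p β n).degree ≤ (n : ℕ) ∧
      ∀ z : ℂ, z ≠ 0 →
        (C p β n).eval ((z + z⁻¹) / 2) =
          ∑ r ∈ Finset.range (n + 1),
            qp β p r * qp β p (n - r) / (qp p p r * qp p p (n - r)) * z ^ ((n : ℤ) - 2 * r)

/-- The matrix-valued polynomial `P_n` (entries in `Polynomial ℂ`); here `L = 2ℓ`. -/
def Pm (q : ℂ) (L : ℕ) (C : ℂ → ℂ → ℕ → Polynomial ℂ) (n : ℕ) :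
    Matrix (Fin (L + 1)) (Fin (L + 1)) (Polynomial ℂ) :=
  Matrix.of fun i j =>
    ∑ k ∈ Finset.Icc (i : ℕ) (min L (n + (j : ℕ))),
      Polynomial.C
          ((-1 : ℂ) ^ k *
            q ^ ((n : ℤ) + (2 * (k : ℤ) + 1) * ((k : ℤ) - ((i : ℕ) : ℤ)) +
                ((j : ℕ) : ℤ) * (2 * (k : ℤ) + 1) + 2 * (k : ℤ) * ((L : ℤ) + (n : ℤ) + 1) -
                (k : ℤ) ^ 2) *
            (qp (q ^ 2) (q ^ 2) k * qp (q ^ 2) (q ^ 2) (k + (i : ℕ)) /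
              (qp (q ^ 2) (q ^ 2) (2 * k) * qp (q ^ 2) (q ^ 2) (i : ℕ))) *
            (qp (q ^ (-(2 * (L : ℤ)))) (q ^ 2) k *
                qp (q ^ (-(2 * ((j : ℕ) : ℤ) + 2 * (n : ℤ)))) (q ^ 2) k /
              (qp (q ^ 2) (q ^ 2) k * qp (q ^ (2 * (L : ℤ) + 4)) (q ^ 2) k)) *
            (qp (q ^ 2) (q ^ 2) (n + (j : ℕ) - k) /
              qp (q ^ (4 * (k : ℤ) + 4)) (q ^ 2) (n + (j : ℕ) - k)) *
            qRacah (q ^ 2) 1 1 (q ^ (-(2 * (n : ℤ) + 2 * ((j : ℕ) : ℤ) + 2)))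
              (q ^ (-(2 * (L : ℤ) + 2))) k (j : ℕ)) *
        (C (q ^ 2) (q ^ (-(2 * (k : ℤ)))) (k - (i : ℕ)) *
          C (q ^ 2) (q ^ (2 * (k : ℤ) + 2)) (n + (j : ℕ) - k))

/-- Evaluation of the matrix-valued polynomial `P_n` at a point. -/
def evP (q : ℂ) (L : ℕ) (C : ℂ → ℂ → ℕ → Polynomial ℂ) (n : ℕ) (x : ℂ) :
    Matrix (Fin (L + 1)) (Fin (L + 1)) ℂ :=
  (Pm q L C n).map (Polynomial.eval x)

/-- The coefficients `α_t(m,n)` of the weight. -/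
def alphaC (q : ℂ) (L m n t : ℕ) : ℂ :=
  q ^ (2 * (n : ℤ) * ((L : ℤ) + 1) - (n : ℤ) ^ 2 - (2 * (L : ℤ) + 3) * (t : ℤ) + (t : ℤ) ^ 2 -
      (L : ℤ) + (m : ℤ)) *
    ((1 - q ^ (2 * (L : ℤ) + 2)) / (1 - q ^ (2 * (m : ℤ) + 2))) *
    (qp (q ^ 2) (q ^ 2) (L - n) * qp (q ^ 2) (q ^ 2) n / qp (q ^ 2) (q ^ 2) L) *
    ((-1 : ℂ) ^ ((m : ℤ) - (t : ℤ)) * qp (q ^ (2 * (m : ℤ) - 2 * (L : ℤ))) (q ^ 2) (n - t) /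
      qp (q ^ (2 * (m : ℤ) + 4)) (q ^ 2) (n - t)) *
    (qp (q ^ (2 * (L : ℤ) + 4 - 2 * (t : ℤ))) (q ^ 2) t / qp (q ^ 2) (q ^ 2) t)

/-- The matrix weight `W(x)`. -/
def Wm (q : ℂ) (L : ℕ) (x : ℂ) : Matrix (Fin (L + 1)) (Fin (L + 1)) ℂ :=
  Matrix.of fun i j =>
    ∑ t ∈ Finset.range (max (i : ℕ) (j : ℕ) + 1),
      alphaC q L (min (i : ℕ) (j : ℕ)) (max (i : ℕ) (j : ℕ)) t *
        (Polynomial.Chebyshev.U ℂ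
            ((min (i : ℕ) (j : ℕ) : ℤ) + (max (i : ℕ) (j : ℕ) : ℤ) - 2 * (t : ℤ))).eval x

/-- The antidiagonal involution `J`. -/
def Jm (L : ℕ) : Matrix (Fin (L + 1)) (Fin (L + 1)) ℂ :=
  Matrix.of fun i j => if (i : ℕ) + (j : ℕ) = L then 1 else 0

/-- The diagonal leading-coefficient matrix `Γ_n`. -/
def Gam (q : ℂ) (L n : ℕ) : Matrix (Fin (L + 1)) (Fin (L + 1)) ℂ :=
  Matrix.diagonal fun i =>
    2 ^ n * q ^ n * qp (q ^ (2 * ((i : ℕ) : ℤ) + 2)) (q ^ 2) n *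
        qp (q ^ (2 * (L : ℤ) - 2 * ((i : ℕ) : ℤ) + 2)) (q ^ 2) n /
      (qp (q ^ 2) (q ^ 2) n * qp (q ^ (2 * (L : ℤ) + 4)) (q ^ 2) n)

/-- The squared-norm matrix `G_m`. -/
def Gmat (q : ℂ) (L m : ℕ) : Matrix (Fin (L + 1)) (Fin (L + 1)) ℂ :=
  Matrix.diagonal fun i =>
    q ^ (2 * (m : ℤ) - (L : ℤ)) * (1 - q ^ (2 * (L : ℤ) + 2)) ^ 2 /
      ((1 - q ^ (2 * (m : ℤ) + 2 * ((i : ℕ) : ℤ) + 2)) *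
        (1 - q ^ (2 * (L : ℤ) - 2 * ((i : ℕ) : ℤ) + 2 * (m : ℤ) + 2)))

/-- The unipotent lower triangular matrix `L(x)` of the LDU decomposition. -/
def Lm (q : ℂ) (L : ℕ) (C : ℂ → ℂ → ℕ → Polynomial ℂ) (x : ℂ) :
    Matrix (Fin (L + 1)) (Fin (L + 1)) ℂ :=
  Matrix.of fun m k =>
    if (k : ℕ) ≤ (m : ℕ) then
      q ^ (((m : ℕ) : ℤ) - ((k : ℕ) : ℤ)) * qp (q ^ 2) (q ^ 2) (m : ℕ) *
          qp (q ^ 2) (q ^ 2) (2 * (k : ℕ) + 1) /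
          (qp (q ^ 2) (q ^ 2) ((m : ℕ) + (k : ℕ) + 1) * qp (q ^ 2) (q ^ 2) (k : ℕ)) *
        (C (q ^ 2) (q ^ (2 * (k : ℕ) + 2)) ((m : ℕ) - (k : ℕ))).eval x
    else 0

/-- The claimed inverse of `L(x)`. -/
def Linv (q : ℂ) (L : ℕ) (C : ℂ → ℂ → ℕ → Polynomial ℂ) (x : ℂ) :
    Matrix (Fin (L + 1)) (Fin (L + 1)) ℂ :=
  Matrix.of fun k n =>
    if (n : ℕ) ≤ (k : ℕ) then
      q ^ ((2 * ((k : ℕ) : ℤ) + 1) * (((k : ℕ) : ℤ) - ((n : ℕ) : ℤ))) *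
          qp (q ^ 2) (q ^ 2) (k : ℕ) * qp (q ^ 2) (q ^ 2) ((k : ℕ) + (n : ℕ)) /
          (qp (q ^ 2) (q ^ 2) (2 * (k : ℕ)) * qp (q ^ 2) (q ^ 2) (n : ℕ)) *
        (C (q ^ 2) (q ^ (-(2 * ((k : ℕ) : ℤ)))) ((k : ℕ) - (n : ℕ))).eval x
    else 0

/-- The constants `c_k(ℓ)`. -/
def ckC (q : ℂ) (L k : ℕ) : ℂ :=
  q ^ (-(L : ℤ)) / 4 * (1 - q ^ (4 * k + 2)) * qp (q ^ 2) (q ^ 2) (L + k + 1) *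
      qp (q ^ 2) (q ^ 2) (L - k) * qp (q ^ 2) (q ^ 2) k ^ 4 /
    (qp (q ^ 2) (q ^ 2) (2 * k + 1) ^ 2 * qp (q ^ 2) (q ^ 2) L ^ 2)

/-- The diagonal part `T(x)` of the LDU decomposition. -/
def Tm (q : ℂ) (L : ℕ) (x : ℂ) : Matrix (Fin (L + 1)) (Fin (L + 1)) ℂ :=
  Matrix.diagonal fun k =>
    ckC q L (k : ℕ) *
      (4 * ∏ j ∈ Finset.Icc 1 (k : ℕ), (1 - 2 * (2 * x ^ 2 - 1) * q ^ (2 * j) + q ^ (4 * j)))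

/-- The coefficient matrix `M₁(z)` of the q-difference operator `D₁`. -/
def M1f (q : ℂ) (L : ℕ) (z : ℂ) : Matrix (Fin (L + 1)) (Fin (L + 1)) ℂ :=
  Matrix.of fun i j =>
    if (j : ℕ) = (i : ℕ) + 1 then
      -(q ^ (1 - ((i : ℕ) : ℤ)) * (1 - q ^ (2 * (i : ℕ) + 2)) / (1 - q ^ 2) ^ 2 *
        (z / (1 - z ^ 2)))
    else if (j : ℕ) = (i : ℕ) then
      q ^ (1 - ((i : ℕ) : ℤ)) / (1 - q ^ 2) ^ 2 *
        ((1 - q ^ (2 * (i : ℕ) + 2) * z ^ 2) / (1 - z ^ 2))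
    else 0

/-- `M₂(z) = J M₁(z) J`. -/
def M2f (q : ℂ) (L : ℕ) (z : ℂ) : Matrix (Fin (L + 1)) (Fin (L + 1)) ℂ :=
  Jm L * M1f q L z * Jm L

/-- The eigenvalue matrix `Λ_n(1)`. -/
def Lam1 (q : ℂ) (L n : ℕ) : Matrix (Fin (L + 1)) (Fin (L + 1)) ℂ :=
  Matrix.diagonal fun j =>
    (q ^ (-((j : ℕ) : ℤ) - (n : ℤ) - 1) + q ^ (((j : ℕ) : ℤ) + (n : ℤ) + 1)) / (q⁻¹ - q) ^ 2

/-- The eigenvalue matrix `Λ_n(2) = J Λ_n(1) J`. -/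
def Lam2 (q : ℂ) (L n : ℕ) : Matrix (Fin (L + 1)) (Fin (L + 1)) ℂ :=
  Jm L * Lam1 q L n * Jm L

/-- The diagonal coefficient matrix `K₁(z)` of the decoupled operator. -/
def K1f (q : ℂ) (L : ℕ) (z : ℂ) : Matrix (Fin (L + 1)) (Fin (L + 1)) ℂ :=
  Matrix.diagonal fun i =>
    q ^ (1 - ((i : ℕ) : ℤ)) / (1 - q ^ 2) ^ 2 *
      ((1 - q ^ (2 * (i : ℕ) + 2) * z ^ 2) / (1 - z ^ 2))

/-- The symmetric Laurent polynomial `Ĉ_k(z;β|p)`. -/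
def Chat (p β : ℂ) (k : ℕ) (z : ℂ) : ℂ :=
  ∑ r ∈ Finset.range (k + 1),
    qp β p r * qp β p (k - r) / (qp p p r * qp p p (k - r)) * z ^ ((k : ℤ) - 2 * (r : ℤ))

/-- The matrix polynomials `R_n(x) = L(x)ᵀ P_n(x) Γ_n⁻¹`. -/
def Rmat (q : ℂ) (L : ℕ) (C : ℂ → ℂ → ℕ → Polynomial ℂ) (n : ℕ) (x : ℂ) :
    Matrix (Fin (L + 1)) (Fin (L + 1)) ℂ :=
  (Lm q L C x)ᵀ * evP q L C n x * (Gam q L n)⁻¹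


/-- genericity of q -/
def Gen (q : ℂ) : Prop := q ≠ 0 ∧ ∀ n : ℤ, n ≠ 0 → q ^ n ≠ 1

lemma qp_succ (a p : ℂ) (n : ℕ) : qp a p (n + 1) = qp a p n * (1 - a * p ^ n) := by
  simp [qp, Finset.prod_range_succ]

lemma qp_zero (a p : ℂ) : qp a p 0 = 1 := by simp [qp]

lemma qp_succ' (a p : ℂ) (n : ℕ) : qp a p (n + 1) = (1 - a) * qp (a * p) p n := by
  simp only [qp, Finset.prod_range_succ', pow_zero, mul_one, pow_succ]
  rw [mul_comm]
  congr 1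
  exact Finset.prod_congr rfl fun j _ => by ring

lemma Gen.pow_ne {q : ℂ} (h : Gen q) (n : ℕ) (hn : n ≠ 0) : q ^ n ≠ 1 := by
  have := h.2 n (by exact_mod_cast hn)
  simpa using this

lemma Gen.p_ne {q : ℂ} (h : Gen q) (n : ℕ) : 1 - q ^ 2 * (q ^ 2) ^ n ≠ 0 := by
  have := h.pow_ne (2 * n + 2) (by omega)
  intro h0
  apply this
  linear_combination -h0

lemma Gen.qp_ne {q : ℂ} (h : Gen q) (n : ℕ) : qp (q ^ 2) (q ^ 2) n ≠ 0 := by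
  unfold qp
  exact Finset.prod_ne_zero_iff.2 fun j _ => h.p_ne j

lemma Chat_inv (p β : ℂ) (N : ℕ) (z : ℂ) : Chat p β N z⁻¹ = Chat p β N z := by
  unfold Chat
  rw [← Finset.sum_range_reflect]
  refine Finset.sum_congr rfl fun r hr => ?_
  have hr' : r ≤ N := by simpa [Nat.lt_succ_iff] using hr
  have e : N + 1 - 1 - r = N - r := by omega
  have e2 : N - (N - r) = r := by omega
  rw [e, e2, _root_.inv_zpow', Nat.cast_sub hr']
  congr 1
  · ring
  · congr 1; ring

lemma Chat_zero (p β z : ℂ) : Chat p β 0 z = 1 := by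
  simp [Chat, qp]

/-- coefficient -/
def ac (q β : ℂ) (r : ℕ) : ℂ := qp β (q ^ 2) r / qp (q ^ 2) (q ^ 2) r

lemma ac_succ {q : ℂ} (h : Gen q) (β : ℂ) (r : ℕ) :
    (1 - (q ^ 2) ^ (r + 1)) * ac q β (r + 1) = (1 - β * (q ^ 2) ^ r) * ac q β r := by
  unfold ac
  have h1 := h.p_ne r
  have h2 := h.qp_ne r
  rw [qp_succ, qp_succ]
  rw [show (q ^ 2) ^ (r + 1) = q ^ 2 * (q ^ 2) ^ r by ring]
  field_simp

lemma ac_shift {q : ℂ} (β : ℂ) (r : ℕ) :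
    (1 - β) * ac q (β * q ^ 2) r = (1 - β * (q ^ 2) ^ r) * ac q β r := by
  unfold ac
  rw [← mul_div_assoc, ← mul_div_assoc, ← qp_succ', qp_succ]
  ring

/-- moments -/
def mom (q β : ℂ) (N : ℕ) (z : ℂ) (w : ℕ → ℂ) : ℂ :=
  ∑ r ∈ Finset.range (N + 1), w r * (ac q β r * ac q β (N - r) * z ^ ((N : ℤ) - 2 * (r : ℤ)))

lemma Chat_mom (q β : ℂ) (N : ℕ) (z : ℂ) : Chat (q ^ 2) β N z = mom q β N z fun _ => 1 := by
  unfold Chat mom ac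
  refine Finset.sum_congr rfl fun r _ => ?_
  ring

lemma Chat_mom_l {q : ℂ} (h : Gen q) (β : ℂ) (N : ℕ) (z : ℂ) :
    q ^ N * Chat (q ^ 2) β N (q⁻¹ * z) = mom q β N z fun r => (q ^ 2) ^ r := by
  rw [Chat_mom]
  unfold mom
  rw [Finset.mul_sum]
  refine Finset.sum_congr rfl fun r _ => ?_
  have : q ^ N * q⁻¹ ^ ((N : ℤ) - 2 * (r : ℤ)) = (q ^ 2) ^ r := by
    rw [_root_.inv_zpow', ← zpow_natCast, ← zpow_add₀ h.1, ← pow_mul, ← zpow_natCast]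
    congr 1; push_cast; ring
  rw [mul_zpow]; beta_reduce; rw [← this]; ring

lemma Chat_mom_r {q : ℂ} (h : Gen q) (β : ℂ) (N : ℕ) (z : ℂ) :
    q ^ N * Chat (q ^ 2) β N (q * z) = mom q β N z fun r => (q ^ 2) ^ (N - r) := by
  rw [Chat_mom]
  unfold mom
  rw [Finset.mul_sum]
  refine Finset.sum_congr rfl fun r hr => ?_
  have hr' : r ≤ N := by simpa [Nat.lt_succ_iff] using hr
  have : q ^ N * q ^ ((N : ℤ) - 2 * (r : ℤ)) = (q ^ 2) ^ (N - r) := by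
    rw [← zpow_natCast, ← zpow_add₀ h.1, ← pow_mul, ← zpow_natCast]
    congr 1; push_cast [Nat.cast_sub hr']; ring
  rw [mul_zpow]; beta_reduce; rw [← this]; ring

lemma mom_step {q : ℂ} (h : Gen q) (β : ℂ) (N : ℕ) (z : ℂ) (hz : z ≠ 0) (w : ℕ → ℂ) :
    mom q β (N + 1) z (fun r => (1 - (q ^ 2) ^ r) * w (N + 1 - r)) =
      z⁻¹ * mom q β N z (fun r => (1 - β * (q ^ 2) ^ r) * w (N - r)) := by
  unfold mom
  rw [Finset.sum_range_succ', Finset.mul_sum]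
  simp only [pow_zero, sub_self, zero_mul, add_zero]
  refine Finset.sum_congr rfl fun r _ => ?_
  have e : N + 1 - (r + 1) = N - r := by omega
  have e2 : z ^ (((N + 1 : ℕ) : ℤ) - 2 * ((r + 1 : ℕ) : ℤ)) = z⁻¹ * z ^ ((N : ℤ) - 2 * (r : ℤ)) := by
    rw [← _root_.zpow_neg_one, ← zpow_add₀ hz]
    congr 1; push_cast; ring
  rw [e, e2]
  linear_combination (w (N - r) * ac q β (N - r) * z⁻¹ * z ^ ((N : ℤ) - 2 * (r : ℤ))) * ac_succ h β r

lemma mom_add (q β : ℂ) (N : ℕ) (z : ℂ) (w v : ℕ → ℂ) :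
    mom q β N z (fun r => w r + v r) = mom q β N z w + mom q β N z v := by
  unfold mom; rw [← Finset.sum_add_distrib]
  exact Finset.sum_congr rfl fun r _ => by ring

lemma mom_smul (q β : ℂ) (N : ℕ) (z : ℂ) (c : ℂ) (w : ℕ → ℂ) :
    mom q β N z (fun r => c * w r) = c * mom q β N z w := by
  unfold mom; rw [Finset.mul_sum]
  exact Finset.sum_congr rfl fun r _ => by ring

lemma mom_congr (q β : ℂ) (N : ℕ) (z : ℂ) (w v : ℕ → ℂ) (h : ∀ r ≤ N, w r = v r) :
    mom q β N z w = mom q β N z v := by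
  unfold mom
  refine Finset.sum_congr rfl fun r hr => ?_
  rw [h r (by simpa [Nat.lt_succ_iff] using hr)]

lemma Chat_L1 {q : ℂ} (h : Gen q) (β : ℂ) (N : ℕ) (z : ℂ) (hz : z ≠ 0) :
    Chat (q ^ 2) β (N + 1) z - q ^ (N + 1) * Chat (q ^ 2) β (N + 1) (q⁻¹ * z) =
      z⁻¹ * (Chat (q ^ 2) β N z - β * (q ^ N * Chat (q ^ 2) β N (q⁻¹ * z))) := by
  have := mom_step h β N z hz fun _ => 1
  rw [Chat_mom_l h, Chat_mom_l h, Chat_mom, Chat_mom]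
  rw [mom_congr _ _ _ _ _ (fun r => 1 + (-1) * (q ^ 2) ^ r) (fun r _ => by ring),
    mom_congr _ _ _ _ (fun r => (1 - β * (q ^ 2) ^ r) * 1) (fun r => 1 + (-β) * (q ^ 2) ^ r)
      (fun r _ => by ring), mom_add, mom_add, mom_smul, mom_smul] at this
  linear_combination this

lemma Chat_K1 {q : ℂ} (h : Gen q) (β : ℂ) (N : ℕ) (z : ℂ) (hz : z ≠ 0) :
    (1 + β * (q ^ 2) ^ (N + 1)) * Chat (q ^ 2) β (N + 1) z
      - q ^ (N + 1) * Chat (q ^ 2) β (N + 1) (q⁻¹ * z)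
      - β * (q ^ (N + 1) * Chat (q ^ 2) β (N + 1) (q * z)) =
      z⁻¹ * ((1 - β) ^ 2 * Chat (q ^ 2) (β * q ^ 2) N z) := by
  have := mom_step h β N z hz fun s => 1 - β * (q ^ 2) ^ s
  rw [Chat_mom_l h, Chat_mom_r h, Chat_mom, Chat_mom]
  rw [mom_congr _ _ _ _ (fun r => (1 - (q ^ 2) ^ r) * (1 - β * (q ^ 2) ^ (N + 1 - r)))
    (fun r => (1 + β * (q ^ 2) ^ (N + 1)) * 1 + ((-1) * (q ^ 2) ^ r + (-β) * (q ^ 2) ^ (N + 1 - r)))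
    (fun r hr => by
      have : (q ^ 2) ^ (N + 1) = (q ^ 2) ^ r * (q ^ 2) ^ (N + 1 - r) := by
        rw [← pow_add]; congr 1; omega
      rw [this]; ring), mom_add, mom_add, mom_smul, mom_smul, mom_smul] at this
  have e : (1 - β) ^ 2 * mom q (β * q ^ 2) N z (fun _ => 1) =
      mom q β N z fun r => (1 - β * (q ^ 2) ^ r) * (1 - β * (q ^ 2) ^ (N - r)) := by
    unfold mom
    rw [Finset.mul_sum]
    refine Finset.sum_congr rfl fun r _ => ?_
    linear_combination (1 - β) * ac q (β * q ^ 2) (N - r) * z ^ ((N : ℤ) - 2 * (r : ℤ)) * ac_shift (q := q) β r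
      + (1 - β * (q ^ 2) ^ r) * ac q β r * z ^ ((N : ℤ) - 2 * (r : ℤ)) * ac_shift (q := q) β (N - r)
  rw [e]
  linear_combination this

lemma Chat_inv_l {q : ℂ} (β : ℂ) (N : ℕ) (z : ℂ) :
    Chat (q ^ 2) β N (q⁻¹ * z⁻¹) = Chat (q ^ 2) β N (q * z) := by
  rw [← Chat_inv]; congr 1; rw [mul_inv, inv_inv, inv_inv]

lemma Chat_inv_r {q : ℂ} (β : ℂ) (N : ℕ) (z : ℂ) :
    Chat (q ^ 2) β N (q * z⁻¹) = Chat (q ^ 2) β N (q⁻¹ * z) := by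
  rw [← Chat_inv]; congr 1; rw [mul_inv, inv_inv]

lemma Chat_L2 {q : ℂ} (h : Gen q) (β : ℂ) (N : ℕ) (z : ℂ) (hz : z ≠ 0) :
    Chat (q ^ 2) β (N + 1) z - q ^ (N + 1) * Chat (q ^ 2) β (N + 1) (q * z) =
      z * (Chat (q ^ 2) β N z - β * (q ^ N * Chat (q ^ 2) β N (q * z))) := by
  have := Chat_L1 h β N z⁻¹ (inv_ne_zero hz)
  simpa only [Chat_inv_l, Chat_inv, inv_inv] using this

lemma Chat_K2 {q : ℂ} (h : Gen q) (β : ℂ) (N : ℕ) (z : ℂ) (hz : z ≠ 0) :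
    (1 + β * (q ^ 2) ^ (N + 1)) * Chat (q ^ 2) β (N + 1) z
      - q ^ (N + 1) * Chat (q ^ 2) β (N + 1) (q * z)
      - β * (q ^ (N + 1) * Chat (q ^ 2) β (N + 1) (q⁻¹ * z)) =
      z * ((1 - β) ^ 2 * Chat (q ^ 2) (β * q ^ 2) N z) := by
  have := Chat_K1 h β N z⁻¹ (inv_ne_zero hz)
  simpa only [Chat_inv_l, Chat_inv_r, Chat_inv, inv_inv] using this

lemma Chat_AW {q : ℂ} (h : Gen q) (β : ℂ) (N : ℕ) (z : ℂ) (hz : z ≠ 0) :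
    (1 + β * (q ^ 2) ^ N) * (1 - z ^ 2) * Chat (q ^ 2) β N z =
      q ^ N * ((1 - β * z ^ 2) * Chat (q ^ 2) β N (q * z) +
        (β - z ^ 2) * Chat (q ^ 2) β N (q⁻¹ * z)) := by
  cases N with
  | zero => simp only [Chat_zero]; ring
  | succ N =>
    have h1 := Chat_K1 h β N z hz
    have h2 := Chat_K2 h β N z hz
    generalize Chat (q ^ 2) β (N + 1) (q⁻¹ * z) = w at *
    field_simp at h1
    linear_combination h2 - z * h1

lemma Chat_lower {q : ℂ} (h : Gen q) (β : ℂ) (hβ : 1 - β ≠ 0) (N : ℕ) (z : ℂ) (hz : z ≠ 0) :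
    q ^ (N + 1) * (Chat (q ^ 2) β (N + 1) (q * z) - Chat (q ^ 2) β (N + 1) (q⁻¹ * z)) =
      (1 - β) * (z⁻¹ - z) * Chat (q ^ 2) (β * q ^ 2) N z := by
  have h1 := Chat_K1 h β N z hz
  have h2 := Chat_K2 h β N z hz
  apply mul_left_cancel₀ hβ
  linear_combination h1 - h2

lemma Chat_ii {q : ℂ} (h : Gen q) (β : ℂ) (hβ : 1 - β ≠ 0) (N : ℕ) (z : ℂ) (hz : z ≠ 0) :
    (1 - β) * (β - z ^ 2) * Chat (q ^ 2) (β * q ^ 2) N z =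
      z * ((1 + β) * (q ^ (N + 1) * Chat (q ^ 2) β (N + 1) (q * z)) -
        (1 + β * (q ^ 2) ^ (N + 1)) * Chat (q ^ 2) β (N + 1) z) := by
  have h1 := Chat_K1 h β N z hz
  have h2 := Chat_K2 h β N z hz
  apply mul_left_cancel₀ hβ
  generalize Chat (q ^ 2) β (N + 1) (q⁻¹ * z) = w at *
  field_simp at h1
  linear_combination z * h2 - β * h1

/-- symmetric version of `Chat_ii` at `q z`. -/
lemma Chat_ii' {q : ℂ} (h : Gen q) (β : ℂ) (hβ : 1 - β ≠ 0) (N : ℕ) (z : ℂ) (hz : z ≠ 0) :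
    (1 - β) * (1 - β * (q * z) ^ 2) * Chat (q ^ 2) (β * q ^ 2) N (q * z) =
      q * z * ((1 + β * (q ^ 2) ^ (N + 1)) * Chat (q ^ 2) β (N + 1) (q * z) -
        (1 + β) * (q ^ (N + 1) * Chat (q ^ 2) β (N + 1) z)) := by
  have hw : q * z ≠ 0 := mul_ne_zero h.1 hz
  have := Chat_ii h β hβ N (q * z)⁻¹ (inv_ne_zero hw)
  have e : q * (q * z)⁻¹ = z⁻¹ := by field_simp [h.1]
  rw [e] at this
  simp only [Chat_inv] at this
  generalize q * z = w at *
  field_simp at this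
  linear_combination -this


/-- coefficient of the unipotent part -/
def nu (q : ℂ) (i k : ℕ) : ℂ :=
  q ^ ((2 * (k : ℤ) + 1) * ((k : ℤ) - (i : ℤ))) *
    (qp (q ^ 2) (q ^ 2) k * qp (q ^ 2) (q ^ 2) (k + i) /
      (qp (q ^ 2) (q ^ 2) (2 * k) * qp (q ^ 2) (q ^ 2) i))

/-- unipotent part -/
def Nf (q : ℂ) (i k : ℕ) (z : ℂ) : ℂ :=
  if i ≤ k then nu q i k * Chat (q ^ 2) (q ^ (-(2 * (k : ℤ)))) (k - i) z else 0

lemma nu_i {q : ℂ} (h : Gen q) (i k : ℕ) :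
    nu q (i + 1) k * q ^ (2 * k + 1) * (1 - q ^ (2 * i + 2)) =
      nu q i k * (1 - q ^ (2 * (k + i) + 2)) := by
  unfold nu
  have e : q ^ ((2 * (k : ℤ) + 1) * ((k : ℤ) - (i : ℤ))) =
      q ^ ((2 * (k : ℤ) + 1) * ((k : ℤ) - ((i + 1 : ℕ) : ℤ))) * q ^ (2 * k + 1) := by
    rw [← zpow_natCast q (2 * k + 1), ← zpow_add₀ h.1]
    congr 1; push_cast; ring
  rw [e, ← add_assoc k i 1, qp_succ, qp_succ]
  have h1 := h.qp_ne i
  have h2 := h.qp_ne (2 * k)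
  have h3 := h.p_ne i
  field_simp
  ring

lemma nu_k {q : ℂ} (h : Gen q) (i k : ℕ) :
    nu q i (k + 1) * q ^ (2 * i) * ((1 - q ^ (4 * k + 2)) * (1 - q ^ (4 * k + 4))) =
      nu q i k * q ^ (4 * k + 3) * ((1 - q ^ (2 * k + 2)) * (1 - q ^ (2 * (k + i) + 2))) := by
  unfold nu
  have e : q ^ ((2 * ((k + 1 : ℕ) : ℤ) + 1) * (((k + 1 : ℕ) : ℤ) - (i : ℤ))) * q ^ (2 * i) =
      q ^ ((2 * (k : ℤ) + 1) * ((k : ℤ) - (i : ℤ))) * q ^ (4 * k + 3) := by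
    rw [← zpow_natCast q (4 * k + 3), ← zpow_natCast q (2 * i), ← zpow_add₀ h.1, ← zpow_add₀ h.1]
    congr 1; push_cast; ring
  rw [mul_right_comm _ _ (q ^ (2 * i)), e]
  rw [show k + 1 + i = k + i + 1 by omega, show 2 * (k + 1) = 2 * k + 1 + 1 by omega,
    qp_succ, qp_succ, qp_succ, qp_succ]
  have h1 := h.qp_ne i
  have h2 := h.qp_ne (2 * k)
  have h3 := h.p_ne (2 * k)
  have h4 := h.p_ne (2 * k + 1)
  rw [show 1 - q ^ 2 * (q ^ 2) ^ (2 * k) = 1 - q ^ (4 * k + 2) by ring] at *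
  rw [show 1 - q ^ 2 * (q ^ 2) ^ (2 * k + 1) = 1 - q ^ (4 * k + 4) by ring] at *
  field_simp
  ring

lemma int1 {q : ℂ} (h : Gen q) (i k : ℕ) (z : ℂ) (hz : z ≠ 0) :
    -(q ^ (1 - (i : ℤ)) * (1 - q ^ (2 * i + 2)) * z) * Nf q (i + 1) k (q * z) +
      q ^ (1 - (i : ℤ)) * (1 - q ^ (2 * i + 2) * z ^ 2) * Nf q i k (q * z) =
    q ^ (1 - (k : ℤ)) * (1 - q ^ (2 * k + 2) * z ^ 2) * Nf q i k z := by
  have hq := h.1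
  rcases Nat.lt_or_ge k i with hk | hk
  · simp [Nf, show ¬ i ≤ k by omega, show ¬ i + 1 ≤ k by omega]
  obtain ⟨N, rfl⟩ := Nat.exists_eq_add_of_le hk
  cases N with
  | zero => simp [Nf, Chat_zero]
  | succ N =>
    have hn := nu_i h i (i + (N + 1))
    simp only [Nf, show i + 1 ≤ i + (N + 1) by omega, show i ≤ i + (N + 1) by omega, if_true,
      show i + (N + 1) - i = N + 1 by omega, show i + (N + 1) - (i + 1) = N by omega]
    have eb : q ^ (-(2 * ((i + (N + 1) : ℕ) : ℤ))) = ((q ^ i) ^ 2 * (q ^ N) ^ 2 * q ^ 2)⁻¹ := by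
      rw [_root_.zpow_neg]; congr 1
      rw [show (2 * ((i + (N + 1) : ℕ) : ℤ)) = ((2 * (i + (N + 1)) : ℕ) : ℤ) by push_cast; ring,
        zpow_natCast]
      ring
    have e1 : q ^ (1 - (i : ℤ)) = q * (q ^ i)⁻¹ := by
      rw [zpow_sub₀ hq, zpow_one, zpow_natCast]; rfl
    have e2 : q ^ (1 - ((i + (N + 1) : ℕ) : ℤ)) = (q ^ i)⁻¹ * (q ^ N)⁻¹ := by
      rw [zpow_sub₀ hq, zpow_one, zpow_natCast]; field_simp; ring
    rw [eb, e1, e2]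
    obtain ⟨β, hβ⟩ : ∃ β, β = ((q ^ i) ^ 2 * (q ^ N) ^ 2 * q ^ 2)⁻¹ := ⟨_, rfl⟩
    rw [← hβ]
    have l1 := Chat_L1 h β N (q * z) (mul_ne_zero hq hz)
    have l2 := Chat_L2 h β N z hz
    rw [show q⁻¹ * (q * z) = z by field_simp] at l1
    generalize Chat (q ^ 2) β (N + 1) (q * z) = u at *
    generalize Chat (q ^ 2) β (N + 1) z = u' at *
    generalize Chat (q ^ 2) β N (q * z) = v at *
    generalize Chat (q ^ 2) β N z = v' at *
    have hx : q ^ i ≠ 0 := pow_ne_zero _ hq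
    have hy : q ^ N ≠ 0 := pow_ne_zero _ hq
    rw [show q ^ (2 * (i + (N + 1)) + 1) = (q ^ i) ^ 2 * (q ^ N) ^ 2 * q ^ 3 by ring,
      show q ^ (2 * (i + (N + 1) + i) + 2) = (q ^ i) ^ 4 * (q ^ N) ^ 2 * q ^ 4 by ring,
      show q ^ (2 * i + 2) = (q ^ i) ^ 2 * q ^ 2 by ring] at hn
    rw [show q ^ (2 * (i + (N + 1)) + 2) = (q ^ i) ^ 2 * (q ^ N) ^ 2 * q ^ 4 by ring,
      show q ^ (2 * i + 2) = (q ^ i) ^ 2 * q ^ 2 by ring]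
    rw [pow_succ] at l1 l2
    generalize q ^ i = x at *
    generalize q ^ N = y at *
    generalize nu q (i + 1) (i + (N + 1)) = n1 at *
    generalize nu q i (i + (N + 1)) = n0 at *
    subst hβ
    have hn' : n1 * (1 - x ^ 2 * q ^ 2) = n0 * (1 - x ^ 4 * y ^ 2 * q ^ 4) / (x ^ 2 * y ^ 2 * q ^ 3) := by
      field_simp
      linear_combination hn
    have key : -(q * x⁻¹ * z) * ((1 - x ^ 4 * y ^ 2 * q ^ 4) / (x ^ 2 * y ^ 2 * q ^ 3)) * v
        + q * x⁻¹ * (1 - x ^ 2 * q ^ 2 * z ^ 2) * u =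
        x⁻¹ * y⁻¹ * (1 - x ^ 2 * y ^ 2 * q ^ 4 * z ^ 2) * u' := by
      linear_combination (norm := (field_simp; ring)) (-(x * z * q ^ 2)) *
        (q * z * l1 + ((x ^ 2 * y ^ 2 * q ^ 2)⁻¹ * y / z) * l2)
    linear_combination n0 * key - (q * x⁻¹ * z) * v * hn'


/-- lower entry of conjugated operator -/
def Kl (q t b z : ℂ) : ℂ := -(q ^ 2 * b * t⁻¹ * (1 - t ^ 2 / b ^ 2) * z)
/-- diagonal entry -/
def Kd (q t b z : ℂ) : ℂ :=
  q * b * t⁻¹ * 2 * (1 + q ^ 2 * t ^ 2) / ((1 + b ^ 2) * (1 + q ^ 2 * b ^ 2)) *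
    (1 - q ^ 2 * b ^ 2 * z ^ 2)
/-- upper entry constant -/
def Kc (q t b : ℂ) : ℂ :=
  -(b * t⁻¹ * (1 - b ^ 2) ^ 2 * (1 - q ^ 2 * t ^ 2 * b ^ 2) /
    ((1 - q ^ 2 * b ^ 4) * (1 - b ^ 4 / q ^ 2) * (1 + b ^ 2) ^ 2))
/-- upper entry -/
def Kup (q t b z : ℂ) : ℂ :=
  Kc q t b * ((1 - b ^ 2 * z ^ 2) * (1 - q ^ 2 * b ^ 2 * z ^ 2) / z)

lemma Y_alg (q b d t z u v X1 X2 X3 n0 n1 nm np : ℂ) (hq : q ≠ 0) (hb : b ≠ 0) (hd : d ≠ 0)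
    (ht : t ≠ 0) (hz : z ≠ 0) (g1 : d ^ 2 - b ^ 4 ≠ 0) (g2 : 1 - q ^ 2 * d ^ 2 ≠ 0)
    (g3 : 1 - q ^ 2 * b ^ 4 ≠ 0) (g4 : 1 + b ^ 2 ≠ 0) (g5 : 1 + q ^ 2 * b ^ 2 ≠ 0)
    (g6 : b ^ 2 - 1 ≠ 0) (g7 : d ^ 2 - q ^ 2 * b ^ 4 ≠ 0) (g8 : q ^ 2 - b ^ 4 ≠ 0)
    (h1 : X1 = (d * (q ^ 2 * z ^ 2 * b ^ 2 - 1) * u + (b ^ 2 - q ^ 2 * d ^ 2 * z ^ 2) * v) /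
      (b ^ 2 * q * z * (1 - q ^ 2 * d ^ 2)))
    (h2 : (1 - b ^ 2 * z ^ 2) * X2 =
      b ^ 2 * z * ((b ^ 2 + 1) * d * v - (b ^ 2 + d ^ 2) * u) / (b ^ 2 - 1))
    (h3 : X3 = (q ^ 2 * b ^ 2 - 1) * ((b ^ 2 + d ^ 2) * (1 - q ^ 2 * b ^ 2 * z ^ 2) * u -
      (q ^ 2 * b ^ 2 + 1) * d * (b ^ 2 - z ^ 2) * v) /
      (q ^ 2 * b ^ 2 * z * (1 - q ^ 2 * d ^ 2) * (d ^ 2 - q ^ 2 * b ^ 4)))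
    (e1 : n1 = n0 * (q * b ^ 2 * (d ^ 2 - b ^ 2) / (d ^ 2 - b ^ 4)))
    (em : nm = n0 * ((q ^ 2 - b ^ 4) * (1 + b ^ 2) / (q * b ^ 2 * (d ^ 2 - b ^ 4))))
    (ep : np = n0 * (q ^ 3 * b ^ 2 * (d ^ 2 - q ^ 2 * b ^ 4) /
      ((1 - q ^ 2 * b ^ 4) * (1 + q ^ 2 * b ^ 2)))) :
    -(q * (b / d) * t⁻¹ * (1 - q ^ 2 * t ^ 2 / (b / d) ^ 2) * z) * (n1 * X1) +
      q * (b / d) * t⁻¹ * (1 - q ^ 2 * t ^ 2 / (b / d) ^ 2 * z ^ 2) * (n0 * v) =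
    Kup q t b z * (nm * X2) + Kd q t b z * (n0 * u) + Kl q t b z * (np * X3) := by
  have : Kup q t b z * (nm * X2) =
      Kc q t b * nm * (1 - q ^ 2 * b ^ 2 * z ^ 2) / z * ((1 - b ^ 2 * z ^ 2) * X2) := by
    unfold Kup; ring
  rw [this, h2, h1, h3, e1, em, ep]
  unfold Kc Kd Kl
  have g9 : 1 - b ^ 4 / q ^ 2 ≠ 0 := by
    intro h; apply g8; field_simp at h; simpa using h
  field_simp
  ring


lemma Gen.one_add_ne {q : ℂ} (h : Gen q) (k : ℕ) : 1 + (q ^ k) ^ 2 ≠ 0 := by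
  rcases Nat.eq_zero_or_pos k with rfl | hk
  · norm_num
  · intro h0
    apply h.pow_ne (4 * k) (by omega)
    linear_combination ((q ^ k) ^ 2 - 1) * h0

lemma Gen.sub_ne {q : ℂ} (h : Gen q) (a b : ℕ) (hab : a ≠ b) : q ^ a - q ^ b ≠ 0 := by
  intro h0
  apply h.2 ((a : ℤ) - b) (by omega)
  rw [zpow_sub₀ h.1, zpow_natCast, zpow_natCast, sub_eq_zero.1 h0]
  exact div_self (pow_ne_zero _ h.1)

lemma X1_alg {q : ℂ} (h : Gen q) (β : ℂ) (N : ℕ) (z : ℂ) (hz : z ≠ 0) :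
    Chat (q ^ 2) β (N + 1) (q * z) * (1 - q ^ 2 * (q ^ N) ^ 2) =
      (q * z)⁻¹ * (Chat (q ^ 2) β N (q * z) - β * (q ^ N * Chat (q ^ 2) β N z)) +
      q * q ^ N * z * (Chat (q ^ 2) β N z - β * (q ^ N * Chat (q ^ 2) β N (q * z))) := by
  have hq := h.1
  have l1 := Chat_L1 h β N (q * z) (mul_ne_zero hq hz)
  have l2 := Chat_L2 h β N z hz
  rw [show q⁻¹ * (q * z) = z by field_simp] at l1
  linear_combination l1 + q ^ (N + 1) * l2

lemma X3_alg {q : ℂ} (h : Gen q) (β : ℂ) (hβ : 1 - β ≠ 0) (N : ℕ) (z : ℂ) (hz : z ≠ 0) :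
    Chat (q ^ 2) β (N + 1) z * (z * (1 - q ^ 2 * (q ^ N) ^ 2) * (1 - β ^ 2 * q ^ 2 * (q ^ N) ^ 2)) =
      (1 + β) * q ^ N * (1 - β) * (1 - β * q ^ 2 * z ^ 2) * Chat (q ^ 2) (β * q ^ 2) N (q * z) -
      (1 + β * q ^ 2 * (q ^ N) ^ 2) * (1 - β) * (β - z ^ 2) * Chat (q ^ 2) (β * q ^ 2) N z := by
  have l1 := Chat_ii h β hβ N z hz
  have l2 := Chat_ii' h β hβ N z hz
  linear_combination (1 + β * q ^ 2 * (q ^ N) ^ 2) * l1 - (1 + β) * q ^ N * l2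

/-- previous row -/
def Nfm (q : ℂ) (i k : ℕ) (z : ℂ) : ℂ := if i = 0 then 0 else Nf q (i - 1) k z

lemma zp_eb {q : ℂ} (k : ℕ) : q ^ (-(2 * (k : ℤ))) = ((q ^ k) ^ 2)⁻¹ := by
  rw [_root_.zpow_neg]; congr 1
  rw [show (2 * (k : ℤ)) = ((2 * k : ℕ) : ℤ) by push_cast; ring, zpow_natCast]
  ring

lemma int2_main {q : ℂ} (h : Gen q) (t : ℂ) (ht : t ≠ 0) (i k : ℕ) (hik : i ≤ k) (hk : k ≠ 0)
    (z : ℂ) (hz : z ≠ 0) :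
    -(q * q ^ i * t⁻¹ * (1 - q ^ 2 * t ^ 2 / (q ^ i) ^ 2) * z) * Nfm q i k (q * z) +
      q * q ^ i * t⁻¹ * (1 - q ^ 2 * t ^ 2 / (q ^ i) ^ 2 * z ^ 2) * Nf q i k (q * z) =
    Kup q t (q ^ k) z * Nf q i (k - 1) z + Kd q t (q ^ k) z * Nf q i k z +
      Kl q t (q ^ k) z * Nf q i (k + 1) z := by
  have hq := h.1
  obtain ⟨N, rfl⟩ := Nat.exists_eq_add_of_le hik
  obtain ⟨b, hb⟩ : ∃ b, b = q ^ (i + N) := ⟨_, rfl⟩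
  obtain ⟨d, hd⟩ : ∃ d, d = q ^ N := ⟨_, rfl⟩
  have hb0 : b ≠ 0 := hb ▸ pow_ne_zero _ hq
  have hd0 : d ≠ 0 := hd ▸ pow_ne_zero _ hq
  have hx : q ^ i = b / d := by rw [hb, hd, pow_add]; field_simp
  have g1 : d ^ 2 - b ^ 4 ≠ 0 := by
    rw [hb, hd, ← pow_mul, ← pow_mul]; exact h.sub_ne _ _ (by omega)
  have g2 : 1 - q ^ 2 * d ^ 2 ≠ 0 := by
    have := h.p_ne N
    rw [hd]; convert this using 3; ring
  have g3 : 1 - q ^ 2 * b ^ 4 ≠ 0 := by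
    have := h.p_ne (2 * (i + N))
    rw [hb]; convert this using 3; ring
  have g4 : 1 + b ^ 2 ≠ 0 := hb ▸ h.one_add_ne _
  have g5 : 1 + q ^ 2 * b ^ 2 ≠ 0 := by
    have := h.one_add_ne (i + N + 1)
    rw [hb]; convert this using 2 <;> ring
  have g6 : b ^ 2 - 1 ≠ 0 := by
    have := h.sub_ne (2 * (i + N)) 0 (by omega)
    rw [hb]; convert this using 2 <;> ring
  have g7 : d ^ 2 - q ^ 2 * b ^ 4 ≠ 0 := by
    have := h.sub_ne (2 * N) (2 + 4 * (i + N)) (by omega)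
    rw [hb, hd]; convert this using 2 <;> ring
  have g8 : q ^ 2 - b ^ 4 ≠ 0 := by
    have := h.sub_ne 2 (4 * (i + N)) (by omega)
    rw [hb]; convert this using 2 <;> ring
  have g10 : q ^ 2 * b ^ 2 - 1 ≠ 0 := by
    have := h.sub_ne (2 + 2 * (i + N)) 0 (by omega)
    rw [hb]; convert this using 2 <;> ring
  have eb : q ^ (-(2 * ((i + N : ℕ) : ℤ))) = (b ^ 2)⁻¹ := by rw [zp_eb, hb]
  have ebp : q ^ (-(2 * ((i + N + 1 : ℕ) : ℤ))) = (q ^ 2 * b ^ 2)⁻¹ := by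
    rw [zp_eb, hb]; congr 1; ring
  have eβ : (q ^ 2 * b ^ 2)⁻¹ * q ^ 2 = (b ^ 2)⁻¹ := by field_simp
  -- pieces
  have f1 : ∃ n1, Nfm q i (i + N) (q * z) = n1 * Chat (q ^ 2) (b ^ 2)⁻¹ (N + 1) (q * z) ∧
      n1 = nu q i (i + N) * (q * b ^ 2 * (d ^ 2 - b ^ 2) / (d ^ 2 - b ^ 4)) := by
    rcases Nat.eq_zero_or_pos i with rfl | hi
    · refine ⟨0, by simp [Nfm], ?_⟩
      have : d = b := by rw [hb, hd, zero_add]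
      rw [this]; ring
    · obtain ⟨i', rfl⟩ := Nat.exists_eq_add_of_le' hi
      refine ⟨nu q i' (i' + 1 + N), ?_, ?_⟩
      · simp only [Nfm, Nf, Nat.add_sub_cancel, show i' ≤ i' + 1 + N by omega, if_true,
          show i' + 1 ≠ 0 by omega, if_false, eb]
        congr 2; omega
      · have := nu_i h i' (i' + 1 + N)
        rw [show q ^ (2 * (i' + 1 + N) + 1) = q * b ^ 2 by rw [hb]; ring,
          show q ^ (2 * i' + 2) = (b / d) ^ 2 by rw [← hx]; ring,
          show q ^ (2 * (i' + 1 + N + i') + 2) = b ^ 2 * (b / d) ^ 2 by rw [← hx, hb]; ring] at this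
        field_simp at this ⊢
        linear_combination -this
  have f2 : ∃ nm X2, Nf q i (i + N - 1) z = nm * X2 ∧ (1 - b ^ 2 * z ^ 2) * X2 =
      b ^ 2 * z * ((b ^ 2 + 1) * d * Chat (q ^ 2) (b ^ 2)⁻¹ N (q * z) -
        (b ^ 2 + d ^ 2) * Chat (q ^ 2) (b ^ 2)⁻¹ N z) / (b ^ 2 - 1) ∧
      nm = nu q i (i + N) * ((q ^ 2 - b ^ 4) * (1 + b ^ 2) / (q * b ^ 2 * (d ^ 2 - b ^ 4))) := by
    cases N with
    | zero =>
      refine ⟨_, 0, ?_, ?_, rfl⟩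
      · simp only [Nf, show ¬ i ≤ i + 0 - 1 by omega, if_false]; ring
      · rw [Chat_zero, Chat_zero, hd]; ring
    | succ N =>
      refine ⟨nu q i (i + N), Chat (q ^ 2) ((b ^ 2)⁻¹ * q ^ 2) N z, ?_, ?_, ?_⟩
      · simp only [Nf, show i + (N + 1) - 1 = i + N by omega, show i ≤ i + N by omega, if_true,
          show i + N - i = N by omega]
        congr 2
        rw [zp_eb, hb]; field_simp; ring
      · have hβ : 1 - (b ^ 2)⁻¹ ≠ 0 := by
          intro h0; apply g6; field_simp at h0; simpa using h0
        have := Chat_ii h (b ^ 2)⁻¹ hβ N z hz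
        rw [show (q ^ 2) ^ (N + 1) = d ^ 2 by rw [hd]; ring, ← hd] at this
        generalize Chat (q ^ 2) ((b ^ 2)⁻¹ * q ^ 2) N z = X2 at *
        generalize Chat (q ^ 2) (b ^ 2)⁻¹ (N + 1) (q * z) = v at *
        generalize Chat (q ^ 2) (b ^ 2)⁻¹ (N + 1) z = u at *
        field_simp at this ⊢
        linear_combination this
      · have := nu_k h i (i + N)
        rw [show q ^ (4 * (i + N) + 2) = b ^ 4 / q ^ 2 by rw [hb]; field_simp; ring,
          show q ^ (4 * (i + N) + 4) = b ^ 4 by rw [hb]; ring,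
          show q ^ (4 * (i + N) + 3) = b ^ 4 / q by rw [hb]; field_simp; ring,
          show q ^ (2 * (i + N) + 2) = b ^ 2 by rw [hb]; ring,
          show q ^ (2 * (i + N + i) + 2) = b ^ 2 * (b / d) ^ 2 by rw [← hx, hb]; ring,
          show q ^ (2 * i) = (b / d) ^ 2 by rw [← hx]; ring] at this
        change nu q i (i + N + 1) * _ * _ = _ at this
        change nu q i (i + N) = nu q i (i + N + 1) * _
        generalize nu q i (i + N + 1) = A at *
        generalize nu q i (i + N) = A' at *
        field_simp at this
        have g6' : 1 - b ^ 2 ≠ 0 := fun h0 => g6 (by linear_combination -h0)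
        rw [← mul_div_assoc, eq_div_iff (mul_ne_zero (mul_ne_zero hq (pow_ne_zero 2 hb0)) g1)]
        apply mul_left_cancel₀ g6'
        linear_combination -this
  have f3 : ∃ np X3, Nf q i (i + N + 1) z = np * X3 ∧
      X3 = (q ^ 2 * b ^ 2 - 1) * ((b ^ 2 + d ^ 2) * (1 - q ^ 2 * b ^ 2 * z ^ 2) *
        Chat (q ^ 2) (b ^ 2)⁻¹ N z -
      (q ^ 2 * b ^ 2 + 1) * d * (b ^ 2 - z ^ 2) * Chat (q ^ 2) (b ^ 2)⁻¹ N (q * z)) /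
      (q ^ 2 * b ^ 2 * z * (1 - q ^ 2 * d ^ 2) * (d ^ 2 - q ^ 2 * b ^ 4)) ∧
      np = nu q i (i + N) * (q ^ 3 * b ^ 2 * (d ^ 2 - q ^ 2 * b ^ 4) /
        ((1 - q ^ 2 * b ^ 4) * (1 + q ^ 2 * b ^ 2))) := by
    refine ⟨nu q i (i + N + 1), Chat (q ^ 2) (q ^ 2 * b ^ 2)⁻¹ (N + 1) z, ?_, ?_, ?_⟩
    · simp only [Nf, show i ≤ i + N + 1 by omega, if_true, ebp,
          show i + N + 1 - i = N + 1 by omega]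
    · have hβ : 1 - (q ^ 2 * b ^ 2)⁻¹ ≠ 0 := by
        intro h0; apply g10; field_simp at h0; simpa using h0
      have := X3_alg h (q ^ 2 * b ^ 2)⁻¹ hβ N z hz
      rw [eβ, ← hd] at this
      generalize Chat (q ^ 2) (q ^ 2 * b ^ 2)⁻¹ (N + 1) z = X3 at *
      generalize Chat (q ^ 2) (b ^ 2)⁻¹ N (q * z) = v at *
      generalize Chat (q ^ 2) (b ^ 2)⁻¹ N z = u at *
      rw [eq_div_iff (mul_ne_zero (mul_ne_zero (mul_ne_zero (mul_ne_zero (pow_ne_zero 2 hq)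
        (pow_ne_zero 2 hb0)) hz) g2) g7)]
      linear_combination (norm := (field_simp; ring)) (-(q ^ 4 * b ^ 6)) * this
    · have := nu_k h i (i + N)
      rw [show q ^ (4 * (i + N) + 2) = q ^ 2 * b ^ 4 by rw [hb]; ring,
          show q ^ (4 * (i + N) + 4) = q ^ 4 * b ^ 4 by rw [hb]; ring,
          show q ^ (4 * (i + N) + 3) = q ^ 3 * b ^ 4 by rw [hb]; ring,
          show q ^ (2 * (i + N) + 2) = q ^ 2 * b ^ 2 by rw [hb]; ring,
          show q ^ (2 * (i + N + i) + 2) = q ^ 2 * b ^ 2 * (b / d) ^ 2 by rw [← hx, hb]; ring,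
          show q ^ (2 * i) = (b / d) ^ 2 by rw [← hx]; ring] at this
      generalize nu q i (i + N + 1) = A at *
      generalize nu q i (i + N) = A' at *
      field_simp at this
      rw [← mul_div_assoc, eq_div_iff (mul_ne_zero g3 g5)]
      apply mul_left_cancel₀ g10
      linear_combination -this
  obtain ⟨n1, f1a, f1b⟩ := f1
  obtain ⟨nm, X2, f2a, f2b, f2c⟩ := f2
  obtain ⟨np, X3, f3a, f3b, f3c⟩ := f3
  rw [f1a, f2a, f3a, hx, ← hb]
  simp only [Nf, show i ≤ i + N by omega, if_true, show i + N - i = N by omega, eb]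
  refine Y_alg q b d t z _ _ _ X2 X3 _ n1 nm np hq hb0 hd0 ht hz g1 g2 g3 g4 g5 g6 g7 g8 ?_ f2b f3b
    f1b f2c f3c
  have := X1_alg h (b ^ 2)⁻¹ N z hz
  rw [← hd] at this
  generalize Chat (q ^ 2) (b ^ 2)⁻¹ (N + 1) (q * z) = X1 at *
  generalize Chat (q ^ 2) (b ^ 2)⁻¹ N (q * z) = v at *
  generalize Chat (q ^ 2) (b ^ 2)⁻¹ N z = u at *
  field_simp at this ⊢
  linear_combination this


lemma nu_self {q : ℂ} (h : Gen q) (k : ℕ) : nu q k k = 1 := by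
  unfold nu
  have h1 := h.qp_ne k
  have h2 := h.qp_ne (2 * k)
  rw [show k + k = 2 * k by omega, sub_self, mul_zero, zpow_zero]
  field_simp

lemma Nf_self {q : ℂ} (h : Gen q) (k : ℕ) (z : ℂ) : Nf q k k z = 1 := by
  simp [Nf, nu_self h, Chat_zero]

lemma Nf_lt {q : ℂ} (i k : ℕ) (hk : k < i) (z : ℂ) : Nf q i k z = 0 := by
  simp [Nf, show ¬ i ≤ k by omega]

lemma Nf_zero_one {q : ℂ} (h : Gen q) (z : ℂ) (hz : z ≠ 0) :
    Nf q 0 1 z = -(q * (1 - q ^ 2) / (1 - q ^ 4) * (z + z⁻¹)) := by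
  have hq := h.1
  have hn := nu_k h 0 0
  rw [nu_self h] at hn
  simp only [Nat.mul_zero, Nat.zero_add, pow_zero, mul_one, one_mul, Nat.add_zero] at hn
  have h2 : 1 - q ^ 2 ≠ 0 := by simpa using h.p_ne 0
  have h4 : 1 - q ^ 4 ≠ 0 := by have := h.p_ne 1; convert this using 2; ring
  have : nu q 0 1 = q ^ 3 * (1 - q ^ 2) / (1 - q ^ 4) := by
    rw [eq_div_iff h4]
    apply mul_left_cancel₀ h2
    linear_combination hn
  simp only [Nf, Nat.zero_le, if_true, this, zp_eb]
  simp only [Chat, qp, Finset.sum_range_succ, Finset.prod_range_succ, Finset.sum_range_zero,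
    Finset.prod_range_zero, pow_zero, pow_one]
  norm_num
  field_simp
  ring

lemma int2 {q : ℂ} (h : Gen q) (t : ℂ) (ht : t ≠ 0) (i k : ℕ)
    (z : ℂ) (hz : z ≠ 0) :
    -(q * q ^ i * t⁻¹ * (1 - q ^ 2 * t ^ 2 / (q ^ i) ^ 2) * z) * Nfm q i k (q * z) +
      q * q ^ i * t⁻¹ * (1 - q ^ 2 * t ^ 2 / (q ^ i) ^ 2 * z ^ 2) * Nf q i k (q * z) =
    Kup q t (q ^ k) z * Nf q i (k - 1) z + Kd q t (q ^ k) z * Nf q i k z +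
      Kl q t (q ^ k) z * Nf q i (k + 1) z := by
  have hq := h.1
  rcases Nat.lt_or_ge k i with hk | hk
  · rcases Nat.lt_or_ge (k + 1) i with hk1 | hk1
    · have : Nfm q i k (q * z) = 0 := by
        unfold Nfm
        rw [if_neg (by omega), Nf_lt _ _ (by omega)]
      rw [this, Nf_lt _ _ hk, Nf_lt _ _ hk, Nf_lt _ _ hk1, Nf_lt i (k - 1) (by omega)]
      ring
    · obtain rfl : i = k + 1 := by omega
      have : Nfm q (k + 1) k (q * z) = 1 := by
        unfold Nfm
        rw [if_neg (by omega)]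
        exact Nf_self h k _
      rw [this, Nf_lt _ _ hk, Nf_lt _ _ hk, Nf_lt _ (k - 1) (by omega), Nf_self h]
      unfold Kl
      have : q ^ k ≠ 0 := pow_ne_zero _ hq
      rw [pow_succ]
      field_simp
      ring
  · by_cases hk0 : k = 0
    · subst hk0
      obtain rfl : i = 0 := by omega
      rw [Nf_self h, Nf_self h, Nf_zero_one h z hz]
      have h2 : 1 - q ^ 2 ≠ 0 := by simpa using h.p_ne 0
      have h4 : 1 - q ^ 4 ≠ 0 := by have := h.p_ne 1; convert this using 2; ring
      have h3 : 1 + q ^ 2 ≠ 0 := by have := h.one_add_ne 1; simpa using this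
      have e : q * (1 - q ^ 2) / (1 - q ^ 4) = q / (1 + q ^ 2) := by
        rw [div_eq_div_iff h4 h3]; ring
      rw [e]
      simp only [Nfm, Kup, Kc, Kd, Kl, pow_zero, if_true]
      field_simp
      ring
    · exact int2_main h t ht i k hk hk0 z hz


/-- three-term coefficients -/
def cA (p B T V : ℂ) : ℂ := p * (1 - p * B) * (B - V) * (B - T) / ((1 - p * B ^ 2) * (1 + p * B))
/-- three-term coefficients -/
def cE (p B T V : ℂ) : ℂ := 2 * B * (1 + p * T) * (1 + p * V) / ((1 + B) * (1 + p * B))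
/-- three-term coefficients -/
def cC (p B T V : ℂ) : ℂ := (1 - B) * (1 - p * T * B) * (1 - p * V * B) / ((1 + B) * (1 - p * B ^ 2))

/-- weights -/
def wR (p T V J : ℂ) (s : ℕ) : ℂ :=
  qp J⁻¹ p s * qp (J / (p * T * V)) p s * p ^ s /
    (qp p p s ^ 2 * qp T⁻¹ p s * qp V⁻¹ p s)

/-- summand -/
def aR (p B : ℂ) (s : ℕ) : ℂ := qp B⁻¹ p s * qp (p * B) p s

/-- telescoper -/
def gR (p B T V J : ℂ) : ℕ → ℂ
  | 0 => 0
  | s + 1 => p * T * V * aR p B s * (qp J⁻¹ p (s + 1) * qp (J / (p * T * V)) p (s + 1)) /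
      (qp p p s ^ 2 * qp T⁻¹ p s * qp V⁻¹ p s)

lemma tel_alg (p P B T V J : ℂ) (hp : p ≠ 0) (hB : B ≠ 0) (hT : T ≠ 0) (hV : V ≠ 0) (hJ : J ≠ 0)
    (g1 : 1 - p * B ≠ 0) (g2 : 1 + p * B ≠ 0) (g3 : 1 + B ≠ 0) (g4 : 1 - p * B ^ 2 ≠ 0) :
    (cA p B T V * ((1 - (p * B)⁻¹) * (1 - p * P * B) * (1 - p ^ 2 * P * B) / (1 - p * B)) +
      cE p B T V * ((1 - P / B) * (1 - p * P * B)) -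
      (1 - B) * (1 - p * T * B) * (1 - p * V * B) / ((1 + B) * (1 - p * B ^ 2)) *
        (B * (1 - P / B) * (1 - p * P / B)) -
      (J + p * T * V / J) * ((1 - P / B) * (1 - p * P * B))) * (p * P) =
    p * T * V * ((1 - P / B) * (1 - p * P * B) * (1 - p * P / J) * (1 - J * P / (T * V))) -
    p * T * V * ((1 - p * P) ^ 2 * (1 - P / T) * (1 - P / V)) := by
  unfold cA cE
  field_simp
  ring

lemma aR_up (p B : ℂ) (hp : p ≠ 0) (r : ℕ) (g1 : 1 - p * B ≠ 0) :
    aR p (p * B) (r + 1) = aR p B r *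
      ((1 - (p * B)⁻¹) * (1 - p * p ^ r * B) * (1 - p ^ 2 * p ^ r * B) / (1 - p * B)) := by
  unfold aR
  rw [qp_succ', show (p * B)⁻¹ * p = B⁻¹ by rw [mul_inv]; field_simp]
  have e := qp_succ' (p * B) p (r + 1)
  rw [qp_succ, qp_succ, show p * B * p = p * (p * B) by ring] at e
  have : qp (p * (p * B)) p (r + 1) =
      qp (p * B) p r * (1 - p * B * p ^ r) * (1 - p * B * p ^ (r + 1)) / (1 - p * B) := by
    rw [eq_div_iff g1, e]; ring
  rw [this]
  field_simp
  ring

lemma aR_dn (p B : ℂ) (hp : p ≠ 0) (hB : B ≠ 0) (r : ℕ) :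
    (1 - B) * aR p (B / p) (r + 1) = - aR p B r *
      ((1 - B) * (B * (1 - p ^ r / B) * (1 - p * p ^ r / B))) := by
  unfold aR
  rw [show p * (B / p) = B by field_simp, qp_succ' B, mul_comm B p]
  have e := qp_succ' B⁻¹ p (r + 1)
  rw [qp_succ, qp_succ, show B⁻¹ * p = (B / p)⁻¹ by field_simp] at e
  have e2 : (1 - B) * qp (B / p)⁻¹ p (r + 1) = -B * ((1 - B⁻¹) * qp (B / p)⁻¹ p (r + 1)) := by
    field_simp; ring
  have : (1 - B) * (qp (B / p)⁻¹ p (r + 1) * ((1 - B) * qp (p * B) p r)) =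
    ((1 - B) * qp (B / p)⁻¹ p (r + 1)) * ((1 - B) * qp (p * B) p r) := by ring
  rw [this, e2, ← e]
  field_simp
  ring

lemma tel_step (p B T V J : ℂ) (hp : p ≠ 0) (hB : B ≠ 0) (hT : T ≠ 0) (hV : V ≠ 0) (hJ : J ≠ 0)
    (g1 : 1 - p * B ≠ 0) (g2 : 1 + p * B ≠ 0) (g3 : 1 + B ≠ 0) (g4 : 1 - p * B ^ 2 ≠ 0) (s : ℕ)
    (h1 : qp p p s ≠ 0) (h2 : qp T⁻¹ p s ≠ 0) (h3 : qp V⁻¹ p s ≠ 0) :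
    (cA p B T V * aR p (p * B) s + cE p B T V * aR p B s + cC p B T V * aR p (B / p) s -
      (J + p * T * V / J) * aR p B s) * wR p T V J s = gR p B T V J (s + 1) - gR p B T V J s := by
  cases s with
  | zero =>
    simp only [aR, wR, gR, qp, Finset.prod_range_zero, Finset.prod_range_succ, cA, cE, cC]
    field_simp
    ring
  | succ r =>
    have k1 : cC p B T V * aR p (B / p) (r + 1) = - aR p B r *
       ((1 - B) * (1 - p * T * B) * (1 - p * V * B) / ((1 + B) * (1 - p * B ^ 2)) *
        (B * (1 - p ^ r / B) * (1 - p * p ^ r / B))) := by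
      have := aR_dn p B hp hB r
      unfold cC
      linear_combination (1 - p * T * B) * (1 - p * V * B) / ((1 + B) * (1 - p * B ^ 2)) * this
    have k2 : aR p B (r + 1) = aR p B r * ((1 - p ^ r / B) * (1 - p * p ^ r * B)) := by
      unfold aR
      rw [qp_succ, qp_succ]; field_simp
    have al := tel_alg p (p ^ r) B T V J hp hB hT hV hJ g1 g2 g3 g4
    rw [k1, aR_up p B hp r g1]
    simp only [gR]
    rw [k2]
    unfold wR
    rw [qp_succ p, qp_succ T⁻¹, qp_succ V⁻¹, qp_succ J⁻¹ p (r + 1),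
      qp_succ (J / (p * T * V)) p (r + 1)] at *
    generalize qp J⁻¹ p (r + 1) = j1 at *
    generalize qp (J / (p * T * V)) p (r + 1) = j2 at *
    have m1 := left_ne_zero_of_mul h1
    have m2 := left_ne_zero_of_mul h2
    have m3 := left_ne_zero_of_mul h3
    replace h1 := right_ne_zero_of_mul h1
    replace h2 := right_ne_zero_of_mul h2
    replace h3 := right_ne_zero_of_mul h3
    rw [div_eq_mul_inv _ T, div_eq_mul_inv _ V] at al
    rw [mul_comm T⁻¹] at *
    rw [mul_comm V⁻¹] at *
    rw [pow_succ p r]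
    generalize p ^ r = P at *
    generalize qp p p r = x1 at *
    generalize qp T⁻¹ p r = x2 at *
    generalize qp V⁻¹ p r = x3 at *
    generalize aR p B r = a at *
    rw [show J⁻¹ * (P * p) = p * P / J by ring,
      show J / (p * T * V) * (P * p) = J * P / (T * V) by field_simp]
    generalize (J + p * T * V / J) = lam at *
    generalize p * P / J = c1 at *
    generalize J * P / (T * V) = c2 at *
    generalize P * T⁻¹ = c3 at *
    generalize P * V⁻¹ = c4 at *
    generalize (1 - P / B) * (1 - p * P * B) = c6 at *
    generalize (1 - (p * B)⁻¹) * (1 - p * P * B) * (1 - p ^ 2 * P * B) / (1 - p * B) = c7 at *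
    generalize (1 - B) * (1 - p * T * B) * (1 - p * V * B) / ((1 + B) * (1 - p * B ^ 2)) *
        (B * (1 - P / B) * (1 - p * P / B)) = c8 at *
    clear k1 k2
    generalize 1 - p * P = c9 at *
    linear_combination (norm := (field_simp; ring)) a * j1 * j2 / (c9 ^ 2 * x1 ^ 2 * x2 * x3 * (1 - c3) * (1 - c4)) * al

/-- Racah sum -/
def SR (p T V J : ℂ) (j : ℕ) (B : ℂ) : ℂ := ∑ s ∈ Finset.range (j + 1), aR p B s * wR p T V J s

lemma three_term (p B T V J : ℂ) (hp : p ≠ 0) (hB : B ≠ 0) (hT : T ≠ 0) (hV : V ≠ 0) (hJ : J ≠ 0)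
    (g1 : 1 - p * B ≠ 0) (g2 : 1 + p * B ≠ 0) (g3 : 1 + B ≠ 0) (g4 : 1 - p * B ^ 2 ≠ 0) (j : ℕ)
    (h1 : ∀ s ≤ j, qp p p s ≠ 0) (h2 : ∀ s ≤ j, qp T⁻¹ p s ≠ 0) (h3 : ∀ s ≤ j, qp V⁻¹ p s ≠ 0)
    (h4 : J = p ^ j) :
    cA p B T V * SR p T V J j (p * B) + cE p B T V * SR p T V J j B +
      cC p B T V * SR p T V J j (B / p) = (J + p * T * V / J) * SR p T V J j B := by
  have e : gR p B T V J (j + 1) = 0 := by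
    simp only [gR]
    rw [qp_succ J⁻¹, ← h4, inv_mul_cancel₀ hJ]
    simp
  have e0 : gR p B T V J 0 = 0 := rfl
  have := Finset.sum_range_sub (gR p B T V J) (j + 1)
  rw [e, e0, sub_zero] at this
  rw [← sub_eq_zero, ← this]
  unfold SR
  rw [Finset.mul_sum, Finset.mul_sum, Finset.mul_sum, Finset.mul_sum, ← Finset.sum_add_distrib,
    ← Finset.sum_add_distrib, ← Finset.sum_sub_distrib]
  refine Finset.sum_congr rfl fun s hs => ?_
  have hs' : s ≤ j := by simpa [Nat.lt_succ_iff] using hs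
  rw [← tel_step p B T V J hp hB hT hV hJ g1 g2 g3 g4 s (h1 s hs') (h2 s hs') (h3 s hs')]
  ring


lemma Gen.qpz_ne {q : ℂ} (h : Gen q) (a : ℤ) (N : ℕ) (ha : ∀ i < N, a + 2 * (i : ℤ) ≠ 0) :
    qp (q ^ a) (q ^ 2) N ≠ 0 := by
  unfold qp
  refine Finset.prod_ne_zero_iff.2 fun i hi => ?_
  have h1 := h.2 _ (ha i (by simpa using hi))
  intro h0
  apply h1
  rw [zpow_add₀ h.1, _root_.zpow_mul, show (q : ℂ) ^ (2 : ℤ) = q ^ 2 from rfl, zpow_natCast]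
  linear_combination -h0

lemma qp_neg_zero {q : ℂ} (h : Gen q) (a : ℤ) (m N : ℕ) (ha : a = -(2 * (m : ℤ))) (hN : m < N) :
    qp (q ^ a) (q ^ 2) N = 0 := by
  unfold qp
  refine Finset.prod_eq_zero (Finset.mem_range.2 hN) ?_
  have hq := h.1
  rw [ha, zp_eb, ← pow_mul, ← pow_mul, mul_comm 2 m, inv_mul_cancel₀ (pow_ne_zero _ hq), sub_self]

/-- coefficient without the Racah factor -/
def rho (q : ℂ) (L n j k : ℕ) : ℂ :=
  (-1 : ℂ) ^ k * q ^ ((n : ℤ) + (j : ℤ) * (2 * (k : ℤ) + 1) + 2 * (k : ℤ) * ((L : ℤ) + (n : ℤ) + 1) -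
      (k : ℤ) ^ 2) *
    (qp (q ^ (-(2 * (L : ℤ)))) (q ^ 2) k * qp (q ^ (-(2 * (j : ℤ) + 2 * (n : ℤ)))) (q ^ 2) k /
      (qp (q ^ 2) (q ^ 2) k * qp (q ^ (2 * (L : ℤ) + 4)) (q ^ 2) k)) *
    (qp (q ^ 2) (q ^ 2) (n + j - k) / qp (q ^ (4 * (k : ℤ) + 4)) (q ^ 2) (n + j - k))

lemma rho_zero_m {q : ℂ} (h : Gen q) (L n j k : ℕ) (hk : n + j < k) : rho q L n j k = 0 := by
  unfold rho
  rw [qp_neg_zero h (-(2 * (j : ℤ) + 2 * (n : ℤ))) (n + j) k (by push_cast; ring) hk]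
  simp

lemma rho_zero_L {q : ℂ} (h : Gen q) (L n j k : ℕ) (hk : L < k) : rho q L n j k = 0 := by
  unfold rho
  rw [qp_neg_zero h (-(2 * (L : ℤ))) L k rfl hk]
  simp

lemma rho_succ {q : ℂ} (h : Gen q) (L n j k : ℕ) (hk : k < n + j) :
    rho q L n j (k + 1) *
      ((1 - q ^ 4 * (q ^ L) ^ 2 * (q ^ k) ^ 2) * (1 - q ^ 4 * (q ^ (n + j)) ^ 2 * (q ^ k) ^ 2)) =
    -(q * ((q ^ k) ^ 2 - (q ^ L) ^ 2) * (1 + q ^ 2 * (q ^ k) ^ 2) * (1 - q ^ 6 * (q ^ k) ^ 4)) *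
      rho q L n j k := by
  have hq := h.1
  obtain ⟨M, hM⟩ := Nat.exists_eq_add_of_lt hk
  have e1 : n + j - k = M + 1 := by omega
  have e2 : n + j - (k + 1) = M := by omega
  unfold rho
  rw [e1, e2]
  have ex : q ^ ((n : ℤ) + (j : ℤ) * (2 * ((k + 1 : ℕ) : ℤ) + 1) +
      2 * ((k + 1 : ℕ) : ℤ) * ((L : ℤ) + (n : ℤ) + 1) - ((k + 1 : ℕ) : ℤ) ^ 2) =
      q ^ ((n : ℤ) + (j : ℤ) * (2 * (k : ℤ) + 1) + 2 * (k : ℤ) * ((L : ℤ) + (n : ℤ) + 1) -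
      (k : ℤ) ^ 2) * (q ^ (n + j)) ^ 2 * (q ^ L) ^ 2 * q * ((q ^ k) ^ 2)⁻¹ := by
    rw [← zp_eb, ← pow_mul, ← pow_mul, mul_assoc _ _ q, ← pow_succ, ← zpow_natCast,
      ← zpow_natCast q (L * 2 + 1), ← zpow_add₀ hq, ← zpow_add₀ hq, ← zpow_add₀ hq]
    congr 1; push_cast; ring
  have hA := h.qp_ne k
  have hA' := h.p_ne k
  have hB := h.qpz_ne (2 * (L : ℤ) + 4) (k + 1) (fun i _ => by omega)
  have hC := h.qp_ne M
  have hC' := h.p_ne M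
  have hD := h.qpz_ne (4 * (k : ℤ) + 4) (M + 1 + 1) (fun i _ => by omega)
  have eE : qp (q ^ (4 * (k : ℤ) + 4)) (q ^ 2) (M + 1 + 1) =
      (1 - q ^ 4 * (q ^ k) ^ 4) * (1 - q ^ 6 * (q ^ k) ^ 4) *
        qp (q ^ (4 * ((k + 1 : ℕ) : ℤ) + 4)) (q ^ 2) M := by
    rw [qp_succ', qp_succ']
    have t1 : q ^ (4 * (k : ℤ) + 4) = q ^ 4 * (q ^ k) ^ 4 := by
      rw [← pow_mul, ← pow_add, ← zpow_natCast]; congr 1; push_cast; ring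
    have t2 : q ^ (4 * ((k + 1 : ℕ) : ℤ) + 4) = q ^ 8 * (q ^ k) ^ 4 := by
      rw [← pow_mul, ← pow_add, ← zpow_natCast]; congr 1; push_cast; ring
    rw [t1, t2, show q ^ 4 * (q ^ k) ^ 4 * q ^ 2 * q ^ 2 = q ^ 8 * (q ^ k) ^ 4 by ring]
    ring
  have eD := qp_succ (q ^ (4 * (k : ℤ) + 4)) (q ^ 2) (M + 1)
  rw [show q ^ (4 * (k : ℤ) + 4) * (q ^ 2) ^ (M + 1) = q ^ 4 * (q ^ (n + j)) ^ 2 * (q ^ k) ^ 2 by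
    rw [hM, show q ^ (4 * (k : ℤ) + 4) = q ^ (4 * k + 4) by
      rw [← zpow_natCast]; congr 1]
    ring] at eD
  have hD2 := hD
  rw [eE] at hD2
  rw [eD] at eE hD
  rw [ex]
  rw [qp_succ (q ^ (-(2 * (L : ℤ)))), qp_succ (q ^ (-(2 * (j : ℤ) + 2 * (n : ℤ)))),
    qp_succ (q ^ 2) (q ^ 2) k, qp_succ (q ^ 2) (q ^ 2) M]
  rw [qp_succ] at hB ⊢
  rw [show (1 - q ^ (2 * (L : ℤ) + 4) * (q ^ 2) ^ k) = 1 - q ^ 4 * (q ^ L) ^ 2 * (q ^ k) ^ 2 by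
    rw [show q ^ (2 * (L : ℤ) + 4) = q ^ (2 * L + 4) by
      rw [← zpow_natCast]; congr 1]
    ring] at *
  rw [zp_eb, show (-(2 * (j : ℤ) + 2 * (n : ℤ))) = -(2 * ((n + j : ℕ) : ℤ)) by push_cast; ring,
    zp_eb]
  have hb : q ^ k ≠ 0 := pow_ne_zero _ hq
  have ht : q ^ L ≠ 0 := pow_ne_zero _ hq
  have hv : q ^ (n + j) ≠ 0 := pow_ne_zero _ hq
  have ev : q ^ (n + j) = q ^ k * q ^ M * q := by rw [hM]; ring
  have hd : q ^ M ≠ 0 := pow_ne_zero _ hq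
  rw [show (q ^ 2) ^ k = (q ^ k) ^ 2 by ring, show (q ^ 2) ^ M = (q ^ M) ^ 2 by ring] at *
  rw [pow_succ (-1 : ℂ)]
  generalize q ^ ((n : ℤ) + (j : ℤ) * (2 * (k : ℤ) + 1) + 2 * (k : ℤ) * ((L : ℤ) + (n : ℤ) + 1) -
      (k : ℤ) ^ 2) = Q at *
  rw [ev] at eE hD ⊢
  generalize qp ((q ^ L) ^ 2)⁻¹ (q ^ 2) k = x1 at *
  generalize qp ((q ^ k * q ^ M * q) ^ 2)⁻¹ (q ^ 2) k = x2 at *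
  generalize qp (q ^ 2) (q ^ 2) k = x3 at *
  generalize qp (q ^ 2) (q ^ 2) M = x4 at *
  generalize qp (q ^ (2 * (L : ℤ) + 4)) (q ^ 2) k = x5 at *
  generalize qp (q ^ (4 * (k : ℤ) + 4)) (q ^ 2) (M + 1) = x6 at *
  generalize qp (q ^ (4 * ((k + 1 : ℕ) : ℤ) + 4)) (q ^ 2) M = x7 at *
  generalize (-1 : ℂ) ^ k = s at *
  generalize q ^ k = b at *
  generalize q ^ L = t at *
  generalize q ^ M = d at *
  clear ev ex hM eD hv
  have n5 := left_ne_zero_of_mul hB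
  have n5' := right_ne_zero_of_mul hB
  have n6 := left_ne_zero_of_mul hD
  have n6' := right_ne_zero_of_mul hD
  have n7 := right_ne_zero_of_mul hD2
  have n8 := left_ne_zero_of_mul (left_ne_zero_of_mul hD2)
  have n9 := right_ne_zero_of_mul (left_ne_zero_of_mul hD2)
  clear hB hD hD2
  have E7 : x6 = (1 - q ^ 4 * b ^ 4) * (1 - q ^ 6 * b ^ 4) * x7 / (1 - q ^ 4 * (b * d * q) ^ 2 * b ^ 2) := by
    rw [eq_div_iff n6', eE]
  rw [E7]
  generalize h10 : 1 - q ^ 4 * (b * d * q) ^ 2 * b ^ 2 = c10 at *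
  generalize h11 : 1 - q ^ 4 * t ^ 2 * b ^ 2 = c11 at *
  generalize h12 : 1 - q ^ 6 * b ^ 4 = c12 at *
  rw [show 1 - q ^ 4 * b ^ 4 = (1 - q ^ 2 * b ^ 2) * (1 + q ^ 2 * b ^ 2) by ring] at *
  have n8' := right_ne_zero_of_mul n8
  generalize h14 : 1 + q ^ 2 * b ^ 2 = c14 at *
  have i1 : 1 - (t ^ 2)⁻¹ * b ^ 2 = (t ^ 2 - b ^ 2) / t ^ 2 := by field_simp
  have i2 : 1 - ((b * d * q) ^ 2)⁻¹ * b ^ 2 = -(1 - q ^ 2 * d ^ 2) / (d * q) ^ 2 := by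
    field_simp; ring
  rw [i1, i2]
  generalize h13 : 1 - q ^ 2 * d ^ 2 = c13 at *
  generalize h15 : 1 - q ^ 2 * b ^ 2 = c15 at *
  field_simp
  ring


lemma zp_eb' {q : ℂ} (k : ℕ) : (q ^ 2) ^ (-(k : ℤ)) = ((q ^ k) ^ 2)⁻¹ := by
  rw [_root_.zpow_neg, zpow_natCast]; ring

lemma qRacah_SR {q : ℂ} (h : Gen q) (L n j k : ℕ) :
    qRacah (q ^ 2) 1 1 (q ^ (-(2 * (n : ℤ) + 2 * (j : ℤ) + 2))) (q ^ (-(2 * (L : ℤ) + 2))) k j =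
      SR (q ^ 2) ((q ^ L) ^ 2) ((q ^ (n + j)) ^ 2) ((q ^ 2) ^ j) j ((q ^ k) ^ 2) := by
  have hq := h.1
  have ht : q ^ L ≠ 0 := pow_ne_zero _ hq
  have hv : q ^ (n + j) ≠ 0 := pow_ne_zero _ hq
  have e1 : q ^ (-(2 * (n : ℤ) + 2 * (j : ℤ) + 2)) = (q ^ 2 * (q ^ (n + j)) ^ 2)⁻¹ := by
    rw [show (-(2 * (n : ℤ) + 2 * (j : ℤ) + 2)) = -(2 * ((n + j + 1 : ℕ) : ℤ)) by push_cast; ring,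
      zp_eb]
    congr 1; ring
  have e2 : q ^ (-(2 * (L : ℤ) + 2)) = (q ^ 2 * (q ^ L) ^ 2)⁻¹ := by
    rw [show (-(2 * (L : ℤ) + 2)) = -(2 * ((L + 1 : ℕ) : ℤ)) by push_cast; ring, zp_eb]
    congr 1; ring
  unfold qRacah SR
  rw [e1, e2, zp_eb', zp_eb']
  have hsub : Finset.range (min k j + 1) ⊆ Finset.range (j + 1) := by
    intro x hx
    simp only [Finset.mem_range] at *
    omega
  have key : ∀ s, qp (((q ^ k) ^ 2)⁻¹) (q ^ 2) s * qp (1 * 1 * (q ^ 2) ^ (k + 1)) (q ^ 2) s *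
        qp (((q ^ j) ^ 2)⁻¹) (q ^ 2) s *
        qp ((q ^ 2 * (q ^ (n + j)) ^ 2)⁻¹ * (q ^ 2 * (q ^ L) ^ 2)⁻¹ * (q ^ 2) ^ (j + 1)) (q ^ 2) s /
      (qp (1 * q ^ 2) (q ^ 2) s * qp (1 * (q ^ 2 * (q ^ L) ^ 2)⁻¹ * q ^ 2) (q ^ 2) s *
        qp ((q ^ 2 * (q ^ (n + j)) ^ 2)⁻¹ * q ^ 2) (q ^ 2) s * qp (q ^ 2) (q ^ 2) s) * (q ^ 2) ^ s =
      aR (q ^ 2) ((q ^ k) ^ 2) s *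
        wR (q ^ 2) ((q ^ L) ^ 2) ((q ^ (n + j)) ^ 2) ((q ^ 2) ^ j) s := by
    intro s
    unfold aR wR
    rw [show (1 * 1 * (q ^ 2) ^ (k + 1)) = q ^ 2 * (q ^ k) ^ 2 by ring,
      show (q ^ 2) ^ j = (q ^ j) ^ 2 by ring,
      show ((q ^ 2 * (q ^ (n + j)) ^ 2)⁻¹ * (q ^ 2 * (q ^ L) ^ 2)⁻¹ * (q ^ 2) ^ (j + 1)) =
        (q ^ j) ^ 2 / (q ^ 2 * (q ^ L) ^ 2 * (q ^ (n + j)) ^ 2) by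
        rw [show (q ^ 2) ^ (j + 1) = q ^ 2 * (q ^ j) ^ 2 by ring]
        generalize q ^ (n + j) = v at *
        field_simp,
      show (1 * (q ^ 2 * (q ^ L) ^ 2)⁻¹ * q ^ 2) = ((q ^ L) ^ 2)⁻¹ by field_simp,
      show (q ^ 2 * (q ^ (n + j)) ^ 2)⁻¹ * q ^ 2 = ((q ^ (n + j)) ^ 2)⁻¹ by
        generalize q ^ (n + j) = v at *
        field_simp, one_mul]
    ring
  rw [Finset.sum_congr rfl fun s _ => key s]
  refine Finset.sum_subset hsub fun s hs hs' => ?_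
  simp only [Finset.mem_range] at hs hs'
  unfold aR
  rw [← zp_eb, qp_neg_zero h _ k s rfl (by omega)]
  simp

/-- full coefficient -/
def rr (q : ℂ) (L n j k : ℕ) : ℂ :=
  rho q L n j k * SR (q ^ 2) ((q ^ L) ^ 2) ((q ^ (n + j)) ^ 2) ((q ^ 2) ^ j) j ((q ^ k) ^ 2)

/-- shifted coefficient -/
def rrm (q : ℂ) (L n j k : ℕ) : ℂ := if k = 0 then 0 else rr q L n j (k - 1)

lemma r_lower {q : ℂ} (h : Gen q) (L n j k d : ℕ) (hk : n + j = k + d) :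
    -(q ^ k * (q ^ L)⁻¹ * (1 - q ^ 2 * (q ^ L) ^ 2 / (q ^ k) ^ 2) * (1 - (q ^ k) ^ 2) / q ^ d) *
      rrm q L n j k =
    q / (q ^ L * q ^ (n + j)) * cC (q ^ 2) ((q ^ k) ^ 2) ((q ^ L) ^ 2) ((q ^ (n + j)) ^ 2) *
      (rho q L n j k *
        SR (q ^ 2) ((q ^ L) ^ 2) ((q ^ (n + j)) ^ 2) ((q ^ 2) ^ j) j ((q ^ k) ^ 2 / q ^ 2)) := by
  have hq := h.1
  cases k with
  | zero => simp [rrm, cC]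
  | succ k =>
    have hs := rho_succ h L n j k (by omega)
    simp only [rrm, rr, show k + 1 ≠ 0 by omega, if_false, Nat.add_sub_cancel]
    rw [show (q ^ (k + 1)) ^ 2 / q ^ 2 = (q ^ k) ^ 2 by rw [pow_succ]; field_simp; try ring]
    generalize SR (q ^ 2) ((q ^ L) ^ 2) ((q ^ (n + j)) ^ 2) ((q ^ 2) ^ j) j ((q ^ k) ^ 2) = S
    generalize rho q L n j k = r0 at *
    generalize rho q L n j (k + 1) = r1 at *
    have g1 := h.p_ne (2 * k + 2)
    rw [show 1 - q ^ 2 * (q ^ 2) ^ (2 * k + 2) = 1 - q ^ 6 * (q ^ k) ^ 4 by ring] at g1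
    have g2 := h.one_add_ne (k + 1)
    rw [show 1 + (q ^ (k + 1)) ^ 2 = 1 + q ^ 2 * (q ^ k) ^ 2 by ring] at g2
    have ev : q ^ (n + j) = q * q ^ k * q ^ d := by rw [hk]; ring
    rw [ev] at hs ⊢
    rw [pow_succ]
    have hb : q ^ k ≠ 0 := pow_ne_zero _ hq
    have ht : q ^ L ≠ 0 := pow_ne_zero _ hq
    have hd : q ^ d ≠ 0 := pow_ne_zero _ hq
    unfold cC
    clear ev
    generalize q ^ k = b at *
    generalize q ^ L = t at *
    generalize q ^ d = d at *
    rw [show 1 - q ^ 2 * ((b * q) ^ 2) ^ 2 = 1 - q ^ 6 * b ^ 4 by ring,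
      show 1 + (b * q) ^ 2 = 1 + q ^ 2 * b ^ 2 by ring]
    generalize h3 : 1 - q ^ 6 * b ^ 4 = c3 at *
    generalize h4 : 1 + q ^ 2 * b ^ 2 = c4 at *
    field_simp
    linear_combination -(1 - b ^ 2 * q ^ 2) * S * hs

lemma r_upper {q : ℂ} (h : Gen q) (L n j k d : ℕ) (hk : n + j = k + d) :
    Kc q (q ^ L) (q ^ (k + 1)) * q * (1 - (q ^ d) ^ 2) * (1 - q ^ 4 * (q ^ k) ^ 4 * (q ^ d) ^ 2) /
      ((1 - q ^ 2 * (q ^ k) ^ 2) * q ^ d) * rho q L n j (k + 1) =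
    q / (q ^ L * q ^ (n + j)) * cA (q ^ 2) ((q ^ k) ^ 2) ((q ^ L) ^ 2) ((q ^ (n + j)) ^ 2) *
      rho q L n j k := by
  have hq := h.1
  cases d with
  | zero =>
    rw [hk]
    simp [cA]
  | succ d =>
    have hs := rho_succ h L n j k (by omega)
    generalize rho q L n j k = r0 at *
    generalize rho q L n j (k + 1) = r1 at *
    have g1 := h.p_ne (2 * k + 2)
    rw [show 1 - q ^ 2 * (q ^ 2) ^ (2 * k + 2) = 1 - q ^ 6 * (q ^ k) ^ 4 by ring] at g1
    have g2 := h.one_add_ne (k + 1)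
    rw [show 1 + (q ^ (k + 1)) ^ 2 = 1 + q ^ 2 * (q ^ k) ^ 2 by ring] at g2
    have g3 := h.p_ne (2 * k)
    rw [show 1 - q ^ 2 * (q ^ 2) ^ (2 * k) = 1 - q ^ 2 * (q ^ k) ^ 4 by ring] at g3
    have g4 := h.p_ne k
    rw [show 1 - q ^ 2 * (q ^ 2) ^ k = 1 - q ^ 2 * (q ^ k) ^ 2 by ring] at g4
    have ev : q ^ (n + j) = q * q ^ k * q ^ d := by rw [hk]; ring
    rw [ev] at hs ⊢
    rw [pow_succ q k, pow_succ q d]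
    have hb : q ^ k ≠ 0 := pow_ne_zero _ hq
    have ht : q ^ L ≠ 0 := pow_ne_zero _ hq
    have hd : q ^ d ≠ 0 := pow_ne_zero _ hq
    unfold cA Kc
    clear ev
    generalize q ^ k = b at *
    generalize q ^ L = t at *
    generalize q ^ d = d at *
    rw [show 1 - q ^ 2 * (b * q) ^ 4 = 1 - q ^ 6 * b ^ 4 by ring,
      show 1 - (b * q) ^ 4 / q ^ 2 = 1 - q ^ 2 * b ^ 4 by field_simp,
      show 1 + (b * q) ^ 2 = 1 + q ^ 2 * b ^ 2 by ring,
      show 1 - q ^ 2 * (b ^ 2) ^ 2 = 1 - q ^ 2 * b ^ 4 by ring,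
      show 1 - (b * q) ^ 2 = 1 - q ^ 2 * b ^ 2 by ring]
    generalize h3 : 1 - q ^ 6 * b ^ 4 = c3 at *
    generalize h4 : 1 + q ^ 2 * b ^ 2 = c4 at *
    generalize h5 : 1 - q ^ 2 * b ^ 4 = c5 at *
    generalize h6 : 1 - q ^ 2 * b ^ 2 = c6 at *
    rw [← sub_eq_zero] at hs ⊢
    have : r1 * ((1 - q ^ 4 * t ^ 2 * b ^ 2) * (1 - q ^ 4 * (q * b * d) ^ 2 * b ^ 2)) = 
      -(q * (b ^ 2 - t ^ 2) * c4 * c3) * r0 := by linear_combination hs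
    clear hs
    rw [sub_eq_zero]
    have hm : -(b * q * t⁻¹ * c6 ^ 2 * (1 - q ^ 2 * t ^ 2 * (b * q) ^ 2) / (c3 * c5 * c4 ^ 2)) * q *
        (1 - (d * q) ^ 2) * (1 - q ^ 4 * b ^ 4 * (d * q) ^ 2) / (c6 * (d * q)) * r1 =
      -(b * q * t⁻¹ * c6 ^ 2 / (c3 * c5 * c4 ^ 2)) * q *
        (1 - (d * q) ^ 2) / (c6 * (d * q)) *
        (r1 * ((1 - q ^ 4 * t ^ 2 * b ^ 2) * (1 - q ^ 4 * (q * b * d) ^ 2 * b ^ 2))) := by ring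
    rw [hm, this]
    field_simp

lemma r_three {q : ℂ} (h : Gen q) (L n j k d : ℕ) (hk : n + j = k + d) (hj : j ≤ L) :
    -(q ^ k * (q ^ L)⁻¹ * (1 - q ^ 2 * (q ^ L) ^ 2 / (q ^ k) ^ 2) * (1 - (q ^ k) ^ 2) / q ^ d) *
      rrm q L n j k +
    q * q ^ k * (q ^ L)⁻¹ * 2 * (1 + q ^ 2 * (q ^ L) ^ 2) /
      ((1 + (q ^ k) ^ 2) * (1 + q ^ 2 * (q ^ k) ^ 2)) * (1 + q ^ 2 * (q ^ k) ^ 2 * (q ^ d) ^ 2) /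
      q ^ d * rr q L n j k +
    Kc q (q ^ L) (q ^ (k + 1)) * q * (1 - (q ^ d) ^ 2) * (1 - q ^ 4 * (q ^ k) ^ 4 * (q ^ d) ^ 2) /
      ((1 - q ^ 2 * (q ^ k) ^ 2) * q ^ d) * rr q L n j (k + 1) =
    q / (q ^ L * q ^ (n + j)) *
      ((q ^ 2) ^ j + q ^ 2 * (q ^ L) ^ 2 * (q ^ (n + j)) ^ 2 / (q ^ 2) ^ j) * rr q L n j k := by
  have hq := h.1
  have hb : q ^ k ≠ 0 := pow_ne_zero _ hq
  have ht : q ^ L ≠ 0 := pow_ne_zero _ hq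
  have hv : q ^ (n + j) ≠ 0 := pow_ne_zero _ hq
  have hd : q ^ d ≠ 0 := pow_ne_zero _ hq
  have g1 : 1 - q ^ 2 * (q ^ k) ^ 2 ≠ 0 := by
    have := h.p_ne k; convert this using 2; ring
  have g2 : 1 + q ^ 2 * (q ^ k) ^ 2 ≠ 0 := by
    have := h.one_add_ne (k + 1); convert this using 2; ring
  have g3 := h.one_add_ne k
  have g4 : 1 - q ^ 2 * ((q ^ k) ^ 2) ^ 2 ≠ 0 := by
    have := h.p_ne (2 * k); convert this using 2; ring
  have tt := three_term (q ^ 2) ((q ^ k) ^ 2) ((q ^ L) ^ 2) ((q ^ (n + j)) ^ 2) ((q ^ 2) ^ j)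
    (pow_ne_zero _ hq) (pow_ne_zero _ hb) (pow_ne_zero _ ht) (pow_ne_zero _ hv)
    (pow_ne_zero _ (pow_ne_zero _ hq)) g1 g2 g3 g4 j
    (fun s _ => h.qp_ne s)
    (fun s hs => by rw [← zp_eb]; exact h.qpz_ne _ _ fun i hi => by omega)
    (fun s hs => by rw [← zp_eb]; exact h.qpz_ne _ _ fun i hi => by push_cast; omega) rfl
  have ru := r_upper h L n j k d hk
  rw [r_lower h L n j k d hk]
  unfold rr
  rw [show q ^ 2 * (q ^ k) ^ 2 = (q ^ (k + 1)) ^ 2 by ring] at tt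
  have ecE : q * q ^ k * (q ^ L)⁻¹ * 2 * (1 + q ^ 2 * (q ^ L) ^ 2) /
      ((1 + (q ^ k) ^ 2) * (1 + q ^ 2 * (q ^ k) ^ 2)) * (1 + q ^ 2 * (q ^ k) ^ 2 * (q ^ d) ^ 2) /
      q ^ d = q / (q ^ L * q ^ (n + j)) *
        cE (q ^ 2) ((q ^ k) ^ 2) ((q ^ L) ^ 2) ((q ^ (n + j)) ^ 2) := by
    unfold cE
    rw [hk, pow_add]
    generalize q ^ k = b at *
    generalize q ^ L = t at *
    generalize q ^ d = d at *
    field_simp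
  rw [ecE]
  linear_combination q / (q ^ L * q ^ (n + j)) * rho q L n j k * tt +
    SR (q ^ 2) ((q ^ L) ^ 2) ((q ^ (n + j)) ^ 2) ((q ^ 2) ^ j) j ((q ^ (k + 1)) ^ 2) * ru


/-- decoupled functions -/
def Rf (q : ℂ) (L n j k : ℕ) (z : ℂ) : ℂ :=
  rr q L n j k * Chat (q ^ 2) (q ^ (2 * (k : ℤ) + 2)) (n + j - k) z

/-- shifted -/
def Rfm (q : ℂ) (L n j k : ℕ) (z : ℂ) : ℂ := if k = 0 then 0 else Rf q L n j (k - 1) z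

lemma Rf_zero_m {q : ℂ} (h : Gen q) (L n j k : ℕ) (hk : n + j < k) (z : ℂ) :
    Rf q L n j k z = 0 := by
  simp [Rf, rr, rho_zero_m h L n j k hk]

lemma Rf_zero_L {q : ℂ} (h : Gen q) (L n j k : ℕ) (hk : L < k) (z : ℂ) :
    Rf q L n j k z = 0 := by
  simp [Rf, rr, rho_zero_L h L n j k hk]

lemma zp_pos {q : ℂ} (k : ℕ) : q ^ (2 * (k : ℤ) + 2) = q ^ 2 * (q ^ k) ^ 2 := by
  rw [← pow_mul, ← pow_add, ← zpow_natCast]; congr 1; push_cast; ring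

lemma key1 {q : ℂ} (h : Gen q) (L n j k : ℕ) (z : ℂ) (hz : z ≠ 0) :
    q ^ (1 - (k : ℤ)) * ((1 - q ^ (2 * k + 2) * z ^ 2) * Rf q L n j k (q * z) +
      (q ^ (2 * k + 2) - z ^ 2) * Rf q L n j k (q⁻¹ * z)) =
    (1 - z ^ 2) * (q ^ 2 * (q ^ (-(j : ℤ) - (n : ℤ) - 1) + q ^ ((j : ℤ) + (n : ℤ) + 1))) *
      Rf q L n j k z := by
  have hq := h.1
  rcases Nat.lt_or_ge (n + j) k with hk | hk
  · simp [Rf_zero_m h L n j k hk]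
  obtain ⟨d, hd⟩ := Nat.exists_eq_add_of_le hk
  unfold Rf
  have aw := Chat_AW h (q ^ (2 * (k : ℤ) + 2)) d z hz
  rw [show n + j - k = d by omega]
  have e1 : q ^ (1 - (k : ℤ)) = q / q ^ k := by
    rw [zpow_sub₀ hq, zpow_one, zpow_natCast]
  have e2 : q ^ (-(j : ℤ) - (n : ℤ) - 1) = (q * q ^ k * q ^ d)⁻¹ := by
    rw [show -(j : ℤ) - (n : ℤ) - 1 = -((n + j + 1 : ℕ) : ℤ) by push_cast; ring,
      _root_.zpow_neg, zpow_natCast, hd]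
    congr 1; ring
  have e3 : q ^ ((j : ℤ) + (n : ℤ) + 1) = q * q ^ k * q ^ d := by
    rw [show (j : ℤ) + (n : ℤ) + 1 = ((n + j + 1 : ℕ) : ℤ) by push_cast; ring,
      zpow_natCast, hd]
    ring
  rw [e1, e2, e3]
  rw [zp_pos] at *
  rw [show q ^ (2 * k + 2) = q ^ 2 * (q ^ k) ^ 2 by ring]
  rw [show (q ^ 2) ^ d = (q ^ d) ^ 2 by ring] at aw
  have hb : q ^ k ≠ 0 := pow_ne_zero _ hq
  have hd : q ^ d ≠ 0 := pow_ne_zero _ hq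
  generalize Chat (q ^ 2) (q ^ 2 * (q ^ k) ^ 2) d (q * z) = X at *
  generalize Chat (q ^ 2) (q ^ 2 * (q ^ k) ^ 2) d (q⁻¹ * z) = Y at *
  generalize Chat (q ^ 2) (q ^ 2 * (q ^ k) ^ 2) d z = W at *
  generalize q ^ k = b at *
  generalize q ^ d = d at *
  linear_combination (norm := (field_simp; ring)) -(rr q L n j k * q / (b * d)) * aw

lemma k2L {q : ℂ} (h : Gen q) (L n j k d : ℕ) (hk : n + j = k + d) (z : ℂ) (hz : z ≠ 0) :
    Kl q (q ^ L) (q ^ k / q) z * Rfm q L n j k (q * z) -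
      z ^ 2 * (Kl q (q ^ L) (q ^ k / q) z⁻¹ * Rfm q L n j k (q⁻¹ * z)) =
    (1 - z ^ 2) * (-(q ^ k * (q ^ L)⁻¹ * (1 - q ^ 2 * (q ^ L) ^ 2 / (q ^ k) ^ 2) *
      (1 - (q ^ k) ^ 2) / q ^ d) * rrm q L n j k *
      Chat (q ^ 2) (q ^ 2 * (q ^ k) ^ 2) d z) := by
  have hq := h.1
  cases k with
  | zero => simp [Rfm, rrm]
  | succ k =>
    simp only [Rfm, rrm, Rf, show k + 1 ≠ 0 by omega, if_false, Nat.add_sub_cancel]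
    rw [show n + j - k = d + 1 by omega, zp_pos, show q ^ 2 * (q ^ k) ^ 2 = (q ^ (k + 1)) ^ 2 by ring]
    have g : 1 - (q ^ (k + 1)) ^ 2 ≠ 0 := by
      have := h.p_ne k; convert this using 2; ring
    have lo := Chat_lower h ((q ^ (k + 1)) ^ 2) g d z hz
    rw [mul_comm ((q ^ (k + 1)) ^ 2) (q ^ 2), pow_succ q d] at lo
    have hb : q ^ (k + 1) ≠ 0 := pow_ne_zero _ hq
    have ht : q ^ L ≠ 0 := pow_ne_zero _ hq
    have hd : q ^ d ≠ 0 := pow_ne_zero _ hq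
    unfold Kl
    generalize rr q L n j k = r at *
    generalize Chat (q ^ 2) ((q ^ (k + 1)) ^ 2) (d + 1) (q * z) = X at *
    generalize Chat (q ^ 2) ((q ^ (k + 1)) ^ 2) (d + 1) (q⁻¹ * z) = Y at *
    generalize Chat (q ^ 2) (q ^ 2 * (q ^ (k + 1)) ^ 2) d z = W at *
    generalize q ^ (k + 1) = b at *
    generalize q ^ d = d at *
    generalize q ^ L = t at *
    linear_combination (norm := (field_simp; ring)) -(b * t⁻¹ * (1 - q ^ 2 * t ^ 2 / b ^ 2) * z / d) * r * lo

lemma k2D {q : ℂ} (h : Gen q) (L n j k d : ℕ) (hk : n + j = k + d) (z : ℂ) (hz : z ≠ 0) :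
    Kd q (q ^ L) (q ^ k) z * Rf q L n j k (q * z) -
      z ^ 2 * (Kd q (q ^ L) (q ^ k) z⁻¹ * Rf q L n j k (q⁻¹ * z)) =
    (1 - z ^ 2) * (q * q ^ k * (q ^ L)⁻¹ * 2 * (1 + q ^ 2 * (q ^ L) ^ 2) /
      ((1 + (q ^ k) ^ 2) * (1 + q ^ 2 * (q ^ k) ^ 2)) * (1 + q ^ 2 * (q ^ k) ^ 2 * (q ^ d) ^ 2) /
      q ^ d * rr q L n j k *
      Chat (q ^ 2) (q ^ 2 * (q ^ k) ^ 2) d z) := by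
  have hq := h.1
  unfold Rf Kd
  have aw := Chat_AW h (q ^ 2 * (q ^ k) ^ 2) d z hz
  rw [show n + j - k = d by omega, zp_pos]
  rw [show (q ^ 2) ^ d = (q ^ d) ^ 2 by ring] at aw
  generalize q * q ^ k * (q ^ L)⁻¹ * 2 * (1 + q ^ 2 * (q ^ L) ^ 2) /
      ((1 + (q ^ k) ^ 2) * (1 + q ^ 2 * (q ^ k) ^ 2)) = e
  have hd : q ^ d ≠ 0 := pow_ne_zero _ hq
  generalize Chat (q ^ 2) (q ^ 2 * (q ^ k) ^ 2) d (q * z) = X at *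
  generalize Chat (q ^ 2) (q ^ 2 * (q ^ k) ^ 2) d (q⁻¹ * z) = Y at *
  generalize Chat (q ^ 2) (q ^ 2 * (q ^ k) ^ 2) d z = W at *
  generalize q ^ k = b at *
  generalize q ^ d = d at *
  linear_combination (norm := (field_simp; ring)) -(rr q L n j k * e / d) * aw

lemma k2U {q : ℂ} (h : Gen q) (L n j k d : ℕ) (hk : n + j = k + d) (z : ℂ) (hz : z ≠ 0) :
    Kup q (q ^ L) (q ^ (k + 1)) z * Rf q L n j (k + 1) (q * z) -
      z ^ 2 * (Kup q (q ^ L) (q ^ (k + 1)) z⁻¹ * Rf q L n j (k + 1) (q⁻¹ * z)) =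
    (1 - z ^ 2) * (Kc q (q ^ L) (q ^ (k + 1)) * q * (1 - (q ^ d) ^ 2) *
      (1 - q ^ 4 * (q ^ k) ^ 4 * (q ^ d) ^ 2) /
      ((1 - q ^ 2 * (q ^ k) ^ 2) * q ^ d) * rr q L n j (k + 1) *
      Chat (q ^ 2) (q ^ 2 * (q ^ k) ^ 2) d z) := by
  have hq := h.1
  cases d with
  | zero =>
    rw [Rf_zero_m h L n j (k + 1) (by omega), Rf_zero_m h L n j (k + 1) (by omega)]
    simp
  | succ d =>
    unfold Rf Kup
    have g : 1 - q ^ 2 * (q ^ k) ^ 2 ≠ 0 := by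
      have := h.p_ne k; convert this using 2; ring
    have aw := Chat_AW h (q ^ 2 * (q ^ k) ^ 2) (d + 1) z hz
    have i1 := Chat_ii' h (q ^ 2 * (q ^ k) ^ 2) g d z hz
    have i2 := Chat_ii' h (q ^ 2 * (q ^ k) ^ 2) g d z⁻¹ (inv_ne_zero hz)
    rw [Chat_inv_r, Chat_inv_r, Chat_inv] at i2
    rw [show n + j - (k + 1) = d by omega, zp_pos,
      show q ^ 2 * (q ^ (k + 1)) ^ 2 = q ^ 2 * (q ^ k) ^ 2 * q ^ 2 by ring,
      show (q ^ (k + 1)) ^ 2 = q ^ 2 * (q ^ k) ^ 2 by ring]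
    rw [show (q ^ 2) ^ (d + 1) = (q ^ (d + 1)) ^ 2 by ring] at aw i1 i2
    have hd : q ^ (d + 1) ≠ 0 := pow_ne_zero _ hq
    generalize Chat (q ^ 2) (q ^ 2 * (q ^ k) ^ 2 * q ^ 2) d (q * z) = X1 at *
    generalize Chat (q ^ 2) (q ^ 2 * (q ^ k) ^ 2 * q ^ 2) d (q⁻¹ * z) = Y1 at *
    generalize Chat (q ^ 2) (q ^ 2 * (q ^ k) ^ 2) (d + 1) (q * z) = X at *
    generalize Chat (q ^ 2) (q ^ 2 * (q ^ k) ^ 2) (d + 1) (q⁻¹ * z) = Y at *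
    generalize Chat (q ^ 2) (q ^ 2 * (q ^ k) ^ 2) (d + 1) z = W at *
    rw [show q ^ 4 * (q ^ k) ^ 4 = (q ^ 2 * (q ^ k) ^ 2) ^ 2 by ring]
    generalize q ^ 2 * (q ^ k) ^ 2 = β at *
    generalize q ^ (d + 1) = D at *
    generalize rr q L n j (k + 1) = r at *
    generalize Kc q (q ^ L) (q ^ (k + 1)) = K at *
    have i1' : (1 - β * q ^ 2 * z ^ 2) * X1 = q * z * ((1 + β * D ^ 2) * X - (1 + β) * (D * W)) / (1 - β) := by
      rw [eq_div_iff g]; linear_combination i1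
    have i2' : (1 - β * q ^ 2 * z⁻¹ ^ 2) * Y1 = q * z⁻¹ * ((1 + β * D ^ 2) * Y - (1 + β) * (D * W)) / (1 - β) := by
      rw [eq_div_iff g]; linear_combination i2
    have e : K * ((1 - β * z ^ 2) * (1 - β * q ^ 2 * z ^ 2) / z) * (r * X1) -
        z ^ 2 * (K * ((1 - β * z⁻¹ ^ 2) * (1 - β * q ^ 2 * z⁻¹ ^ 2) / z⁻¹) * (r * Y1)) =
        K * r * (1 - β * z ^ 2) / z * ((1 - β * q ^ 2 * z ^ 2) * X1) -
        z ^ 2 * K * r * (1 - β * z⁻¹ ^ 2) / z⁻¹ * ((1 - β * q ^ 2 * z⁻¹ ^ 2) * Y1) := by ring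
    rw [e, i1', i2']
    have e2 : K * r * (1 - β * z ^ 2) / z * (q * z * ((1 + β * D ^ 2) * X - (1 + β) * (D * W)) / (1 - β)) -
        z ^ 2 * K * r * (1 - β * z⁻¹ ^ 2) / z⁻¹ *
          (q * z⁻¹ * ((1 + β * D ^ 2) * Y - (1 + β) * (D * W)) / (1 - β)) =
        K * r * q / (1 - β) * ((1 - β * z ^ 2) * ((1 + β * D ^ 2) * X - (1 + β) * (D * W)) +
          (β - z ^ 2) * ((1 + β * D ^ 2) * Y - (1 + β) * (D * W))) := by
      field_simp
      ring
    rw [e2]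
    linear_combination (norm := (field_simp; ring)) -(K * r * q / (1 - β) * (1 + β * D ^ 2) / D) * aw

lemma key2 {q : ℂ} (h : Gen q) (L n j k : ℕ) (hj : j ≤ L) (z : ℂ) (hz : z ≠ 0) :
    (Kup q (q ^ L) (q ^ (k + 1)) z * Rf q L n j (k + 1) (q * z) +
      Kd q (q ^ L) (q ^ k) z * Rf q L n j k (q * z) +
      Kl q (q ^ L) (q ^ k / q) z * Rfm q L n j k (q * z)) -
    z ^ 2 * (Kup q (q ^ L) (q ^ (k + 1)) z⁻¹ * Rf q L n j (k + 1) (q⁻¹ * z) +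
      Kd q (q ^ L) (q ^ k) z⁻¹ * Rf q L n j k (q⁻¹ * z) +
      Kl q (q ^ L) (q ^ k / q) z⁻¹ * Rfm q L n j k (q⁻¹ * z)) =
    (1 - z ^ 2) * (q / (q ^ L * q ^ (n + j)) *
      ((q ^ 2) ^ j + q ^ 2 * (q ^ L) ^ 2 * (q ^ (n + j)) ^ 2 / (q ^ 2) ^ j)) * Rf q L n j k z := by
  have hq := h.1
  rcases Nat.lt_or_ge (n + j) k with hk | hk
  · rw [Rf_zero_m h L n j k hk, Rf_zero_m h L n j k hk, Rf_zero_m h L n j k hk,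
      Rf_zero_m h L n j (k + 1) (by omega), Rf_zero_m h L n j (k + 1) (by omega)]
    obtain ⟨k, rfl⟩ : ∃ k', k = k' + 1 := ⟨k - 1, by omega⟩
    have : Rfm q L n j (k + 1) (q * z) = Rfm q L n j (k + 1) (q⁻¹ * z) := by
      simp only [Rfm, show k + 1 ≠ 0 by omega, if_false, Nat.add_sub_cancel, Rf,
        show n + j - k = 0 by omega, Chat_zero]
    rw [this]
    unfold Kl
    field_simp
    ring
  obtain ⟨d, hd⟩ := Nat.exists_eq_add_of_le hk
  have a1 := k2L h L n j k d hd z hz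
  have a2 := k2D h L n j k d hd z hz
  have a3 := k2U h L n j k d hd z hz
  have a4 := r_three h L n j k d hd hj
  have : Rf q L n j k z = rr q L n j k * Chat (q ^ 2) (q ^ 2 * (q ^ k) ^ 2) d z := by
    unfold Rf; rw [zp_pos, show n + j - k = d by omega]
  rw [this]
  linear_combination a1 + a2 + a3 + (1 - z ^ 2) * Chat (q ^ 2) (q ^ 2 * (q ^ k) ^ 2) d z * a4


lemma JMJ (L : ℕ) (M : Matrix (Fin (L + 1)) (Fin (L + 1)) ℂ) (i l : Fin (L + 1)) :
    (Jm L * M * Jm L) i l = M i.rev l.rev := by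
  have c : ∀ a b : Fin (L + 1), ((a : ℕ) + (b : ℕ) = L) ↔ b = a.rev := by
    intro a b
    rw [Fin.ext_iff, Fin.val_rev]; omega
  have c' : ∀ a b : Fin (L + 1), ((a : ℕ) + (b : ℕ) = L) ↔ a = b.rev := by
    intro a b
    rw [Fin.ext_iff, Fin.val_rev]; omega
  rw [Matrix.mul_apply]
  have : ∀ x, (Jm L * M) i x = M i.rev x := by
    intro x
    rw [Matrix.mul_apply]
    simp only [Jm, Matrix.of_apply, c, ite_mul, one_mul, zero_mul, Finset.sum_ite_eq',
      Finset.mem_univ, if_true]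
  simp only [this]
  simp only [Jm, Matrix.of_apply, c', mul_ite, mul_one, mul_zero, Finset.sum_ite_eq',
      Finset.mem_univ, if_true]

lemma row_sum (L : ℕ) (F : ℕ → ℂ) (G : Fin (L + 1) → ℂ) (i i' : ℕ) (a b : ℂ) (hi : i ≤ L)
    (hne : i' ≠ i) (ha : L < i' → a * F i' = 0)
    (hG : ∀ l : Fin (L + 1), G l = if (l : ℕ) = i' then a else if (l : ℕ) = i then b else 0) :
    ∑ l : Fin (L + 1), G l * F l = a * F i' + b * F i := by
  have : ∀ l : Fin (L + 1), G l * F l =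
      (fun l : ℕ => (if l = i' then a * F l else 0) + (if l = i then b * F l else 0)) l := by
    intro l
    rw [hG]
    simp only
    split_ifs with h1 h2
    · exact absurd (h1.symm.trans h2) hne
    · ring
    · ring
    · ring
  rw [Finset.sum_congr rfl fun l _ => this l,
    Fin.sum_univ_eq_sum_range (fun l : ℕ => (if l = i' then a * F l else 0) + (if l = i then b * F l else 0)),
    Finset.sum_add_distrib, Finset.sum_ite_eq', Finset.sum_ite_eq', if_pos (show i ∈ Finset.range (L + 1) from Finset.mem_range.2 (by omega))]
  congr 1
  split_ifs with h1
  · rfl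
  · rw [ha]; simp only [Finset.mem_range] at h1; omega

/-- scalar form of the entries -/
def Ff (q : ℂ) (L n j i : ℕ) (w : ℂ) : ℂ :=
  ∑ k ∈ Finset.range (L + 1), Nf q i k w * Rf q L n j k w

lemma evP_eq {q : ℂ} (h : Gen q) (L : ℕ) (C : ℂ → ℂ → ℕ → Polynomial ℂ) (hC : IsUltra C) (n : ℕ)
    (w : ℂ) (hw : w ≠ 0) (i j : Fin (L + 1)) :
    evP q L C n ((w + w⁻¹) / 2) i j = Ff q L n j i w := by
  have hq := h.1
  have hc : ∀ p β N, (C p β N).eval ((w + w⁻¹) / 2) = Chat p β N w := fun p β N => (hC p β N).2 w hw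
  unfold evP Ff
  rw [Matrix.map_apply]
  unfold Pm
  rw [Matrix.of_apply, Polynomial.eval_finsetSum]
  have hsub : Finset.Icc (i : ℕ) (min L (n + (j : ℕ))) ⊆ Finset.range (L + 1) := by
    intro x hx
    simp only [Finset.mem_range, Finset.mem_Icc] at *
    omega
  rw [← Finset.sum_subset hsub]
  · refine Finset.sum_congr rfl fun k hk => ?_
    simp only [Finset.mem_Icc] at hk
    rw [Polynomial.eval_mul, Polynomial.eval_mul, Polynomial.eval_C, hc, hc, qRacah_SR h]
    simp only [Nf, hk.1, if_true, Rf, rr, nu, rho]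
    have e : q ^ ((n : ℤ) + (2 * (k : ℤ) + 1) * ((k : ℤ) - ((i : ℕ) : ℤ)) +
                ((j : ℕ) : ℤ) * (2 * (k : ℤ) + 1) + 2 * (k : ℤ) * ((L : ℤ) + (n : ℤ) + 1) -
                (k : ℤ) ^ 2) = q ^ ((2 * (k : ℤ) + 1) * ((k : ℤ) - ((i : ℕ) : ℤ))) *
          q ^ ((n : ℤ) + ((j : ℕ) : ℤ) * (2 * (k : ℤ) + 1) +
            2 * (k : ℤ) * ((L : ℤ) + (n : ℤ) + 1) - (k : ℤ) ^ 2) := by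
      rw [← zpow_add₀ hq]; congr 1; ring
    rw [e]
    ring
  · intro k hk hk'
    simp only [Finset.mem_range, Finset.mem_Icc] at hk hk'
    by_cases hik : (i : ℕ) ≤ k
    · rw [Rf_zero_m h L n j k (by omega), mul_zero]
    · rw [Nf_lt _ _ (by omega), zero_mul]

lemma Nf_inv (q : ℂ) (i k : ℕ) (z : ℂ) : Nf q i k z⁻¹ = Nf q i k z := by
  unfold Nf; rw [Chat_inv]

lemma Nf_inv_r (q : ℂ) (i k : ℕ) (z : ℂ) : Nf q i k (q * z⁻¹) = Nf q i k (q⁻¹ * z) := by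
  unfold Nf; rw [Chat_inv_r]

lemma Nfm_inv_r (q : ℂ) (i k : ℕ) (z : ℂ) : Nfm q i k (q * z⁻¹) = Nfm q i k (q⁻¹ * z) := by
  unfold Nfm; rw [Nf_inv_r]

lemma Ff_top {q : ℂ} (L n j i : ℕ) (hi : L < i) (w : ℂ) : Ff q L n j i w = 0 := by
  unfold Ff
  refine Finset.sum_eq_zero fun k hk => ?_
  simp only [Finset.mem_range] at hk
  rw [Nf_lt _ _ (by omega), zero_mul]

lemma part1 {q : ℂ} (h : Gen q) (L n j i : ℕ) (z : ℂ) (hz : z ≠ 0) :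
    (-(q ^ (1 - (i : ℤ)) * (1 - q ^ (2 * i + 2)) * z) * Ff q L n j (i + 1) (q * z) +
      q ^ (1 - (i : ℤ)) * (1 - q ^ (2 * i + 2) * z ^ 2) * Ff q L n j i (q * z)) -
    z ^ 2 * (-(q ^ (1 - (i : ℤ)) * (1 - q ^ (2 * i + 2)) * z⁻¹) * Ff q L n j (i + 1) (q⁻¹ * z) +
      q ^ (1 - (i : ℤ)) * (1 - q ^ (2 * i + 2) * z⁻¹ ^ 2) * Ff q L n j i (q⁻¹ * z)) =
    (1 - z ^ 2) * (q ^ 2 * (q ^ (-(j : ℤ) - (n : ℤ) - 1) + q ^ ((j : ℤ) + (n : ℤ) + 1))) *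
      Ff q L n j i z := by
  unfold Ff
  simp only [Finset.mul_sum, ← Finset.sum_add_distrib, ← Finset.sum_sub_distrib]
  refine Finset.sum_congr rfl fun k _ => ?_
  have a1 := int1 h i k z hz
  have a2 := int1 h i k z⁻¹ (inv_ne_zero hz)
  rw [Nf_inv_r, Nf_inv_r, Nf_inv] at a2
  have a3 := key1 h L n j k z hz
  have hi : z ^ 2 * z⁻¹ ^ 2 = 1 := by field_simp
  linear_combination Rf q L n j k (q * z) * a1 - z ^ 2 * Rf q L n j k (q⁻¹ * z) * a2 +
    Nf q i k z * a3 + q ^ (1 - (k : ℤ)) * q ^ (2 * k + 2) * Nf q i k z * Rf q L n j k (q⁻¹ * z) * hi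

/-- previous row -/
def Ffm (q : ℂ) (L n j i : ℕ) (w : ℂ) : ℂ := if i = 0 then 0 else Ff q L n j (i - 1) w

lemma Ffm_eq (q : ℂ) (L n j i : ℕ) (w : ℂ) :
    Ffm q L n j i w = ∑ k ∈ Finset.range (L + 1), Nfm q i k w * Rf q L n j k w := by
  unfold Ffm Nfm Ff
  split_ifs <;> simp

lemma resum {q : ℂ} (h : Gen q) (L n j i : ℕ) (z y : ℂ) :
    ∑ k ∈ Finset.range (L + 1), (Kup q (q ^ L) (q ^ k) z * Nf q i (k - 1) z +
      Kd q (q ^ L) (q ^ k) z * Nf q i k z + Kl q (q ^ L) (q ^ k) z * Nf q i (k + 1) z) *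
        Rf q L n j k y =
    ∑ k ∈ Finset.range (L + 1), Nf q i k z * (Kup q (q ^ L) (q ^ (k + 1)) z * Rf q L n j (k + 1) y +
      Kd q (q ^ L) (q ^ k) z * Rf q L n j k y + Kl q (q ^ L) (q ^ k / q) z * Rfm q L n j k y) := by
  have hq := h.1
  have ht : q ^ L ≠ 0 := pow_ne_zero _ hq
  have e1 : ∑ k ∈ Finset.range (L + 1), Kup q (q ^ L) (q ^ k) z * Nf q i (k - 1) z * Rf q L n j k y =
      ∑ k ∈ Finset.range (L + 1), Nf q i k z * (Kup q (q ^ L) (q ^ (k + 1)) z * Rf q L n j (k + 1) y) := by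
    rw [Finset.sum_range_succ', Finset.sum_range_succ _ L, Rf_zero_L h L n j (L + 1) (by omega)]
    simp only [Nat.add_sub_cancel]
    have : Kup q (q ^ L) (q ^ 0) z = 0 := by simp [Kup, Kc]
    rw [this]
    simp only [zero_mul, mul_zero, add_zero]
    exact Finset.sum_congr rfl fun k _ => by ring
  have e2 : ∑ k ∈ Finset.range (L + 1), Kl q (q ^ L) (q ^ k) z * Nf q i (k + 1) z * Rf q L n j k y =
      ∑ k ∈ Finset.range (L + 1), Nf q i k z * (Kl q (q ^ L) (q ^ k / q) z * Rfm q L n j k y) := by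
    rw [Finset.sum_range_succ, Finset.sum_range_succ']
    have : Kl q (q ^ L) (q ^ L) z = 0 := by
      unfold Kl; rw [div_self (pow_ne_zero _ ht)]; ring
    rw [this]
    simp only [Rfm, if_true, zero_mul, mul_zero, add_zero]
    refine Finset.sum_congr rfl fun k _ => ?_
    rw [if_neg (by omega), Nat.add_sub_cancel, pow_succ, mul_div_cancel_right₀ _ hq]
    ring
  simp only [add_mul, mul_add, Finset.sum_add_distrib]
  rw [e1, e2]
  congr 2
  exact Finset.sum_congr rfl fun k _ => by ring

lemma half2 {q : ℂ} (h : Gen q) (L n j i : ℕ) (z y : ℂ) (hz : z ≠ 0)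
    (hy : ∀ k, Nf q i k (q * z) = Nf q i k y) (hy' : ∀ k, Nfm q i k (q * z) = Nfm q i k y) :
    -(q * q ^ i * (q ^ L)⁻¹ * (1 - q ^ 2 * (q ^ L) ^ 2 / (q ^ i) ^ 2) * z) * Ffm q L n j i y +
      q * q ^ i * (q ^ L)⁻¹ * (1 - q ^ 2 * (q ^ L) ^ 2 / (q ^ i) ^ 2 * z ^ 2) * Ff q L n j i y =
    ∑ k ∈ Finset.range (L + 1), Nf q i k z * (Kup q (q ^ L) (q ^ (k + 1)) z * Rf q L n j (k + 1) y +
      Kd q (q ^ L) (q ^ k) z * Rf q L n j k y + Kl q (q ^ L) (q ^ k / q) z * Rfm q L n j k y) := by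
  rw [← resum h, Ffm_eq]
  unfold Ff
  simp only [Finset.mul_sum, ← Finset.sum_add_distrib]
  refine Finset.sum_congr rfl fun k _ => ?_
  have := int2 h (q ^ L) (pow_ne_zero _ h.1) i k z hz
  rw [hy, hy'] at this
  linear_combination Rf q L n j k y * this

lemma part2 {q : ℂ} (h : Gen q) (L n j i : ℕ) (hj : j ≤ L) (z : ℂ) (hz : z ≠ 0) :
    (-(q * q ^ i * (q ^ L)⁻¹ * (1 - q ^ 2 * (q ^ L) ^ 2 / (q ^ i) ^ 2) * z) * Ffm q L n j i (q * z) +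
      q * q ^ i * (q ^ L)⁻¹ * (1 - q ^ 2 * (q ^ L) ^ 2 / (q ^ i) ^ 2 * z ^ 2) * Ff q L n j i (q * z)) -
    z ^ 2 * (-(q * q ^ i * (q ^ L)⁻¹ * (1 - q ^ 2 * (q ^ L) ^ 2 / (q ^ i) ^ 2) * z⁻¹) *
        Ffm q L n j i (q⁻¹ * z) +
      q * q ^ i * (q ^ L)⁻¹ * (1 - q ^ 2 * (q ^ L) ^ 2 / (q ^ i) ^ 2 * z⁻¹ ^ 2) *
        Ff q L n j i (q⁻¹ * z)) =
    (1 - z ^ 2) * (q / (q ^ L * q ^ (n + j)) *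
      ((q ^ 2) ^ j + q ^ 2 * (q ^ L) ^ 2 * (q ^ (n + j)) ^ 2 / (q ^ 2) ^ j)) * Ff q L n j i z := by
  rw [half2 h L n j i z (q * z) hz (fun _ => rfl) (fun _ => rfl),
    half2 h L n j i z⁻¹ (q⁻¹ * z) (inv_ne_zero hz) (fun k => Nf_inv_r q i k z)
      (fun k => Nfm_inv_r q i k z)]
  unfold Ff
  simp only [Finset.mul_sum, ← Finset.sum_sub_distrib]
  refine Finset.sum_congr rfl fun k _ => ?_
  have := key2 h L n j k hj z hz
  rw [Nf_inv]
  linear_combination Nf q i k z * this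


lemma inv_aux (z : ℂ) (hz : z ≠ 0) : 1 - z⁻¹ ^ 2 = -(1 - z ^ 2) / z ^ 2 := by
  field_simp; ring

lemma lam_aux (q : ℂ) (hq : q ≠ 0) : (q⁻¹ - q) ^ 2 = (1 - q ^ 2) ^ 2 / q ^ 2 := by
  field_simp

lemma fin1 {q : ℂ} (h : Gen q) (L : ℕ) (C : ℂ → ℂ → ℕ → Polynomial ℂ) (hC : IsUltra C) (n : ℕ)
    (z : ℂ) (hz0 : z ≠ 0) (hz : 1 - z ^ 2 ≠ 0) (i j : Fin (L + 1)) :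
    (M1f q L z * evP q L C n ((q * z + (q * z)⁻¹) / 2) +
        M1f q L z⁻¹ * evP q L C n ((q⁻¹ * z + (q⁻¹ * z)⁻¹) / 2)) i j =
      (evP q L C n ((z + z⁻¹) / 2) * Lam1 q L n) i j := by
  have hq := h.1
  have h2 : 1 - q ^ 2 ≠ 0 := by simpa using h.p_ne 0
  have hi : (i : ℕ) ≤ L := by omega
  have R : ∀ x y : ℂ, y ≠ 0 → (M1f q L x * evP q L C n ((y + y⁻¹) / 2)) i j =
      -(q ^ (1 - ((i : ℕ) : ℤ)) * (1 - q ^ (2 * (i : ℕ) + 2)) / (1 - q ^ 2) ^ 2 *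
        (x / (1 - x ^ 2))) * Ff q L n j (i + 1) y +
      q ^ (1 - ((i : ℕ) : ℤ)) / (1 - q ^ 2) ^ 2 *
        ((1 - q ^ (2 * (i : ℕ) + 2) * x ^ 2) / (1 - x ^ 2)) * Ff q L n j i y := by
    intro x y hy
    rw [Matrix.mul_apply]
    simp only [evP_eq h L C hC n y hy]
    exact row_sum L (fun l => Ff q L n j l y) (fun l => M1f q L x i l) i (i + 1) _ _ hi
      (by omega) (fun hl => by rw [Ff_top _ _ _ _ hl, mul_zero]) (fun l => rfl)
  rw [Matrix.add_apply, R _ _ (mul_ne_zero hq hz0), R _ _ (mul_ne_zero (inv_ne_zero hq) hz0)]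
  unfold Lam1
  rw [Matrix.mul_diagonal, evP_eq h L C hC n z hz0, lam_aux q hq, inv_aux z hz0]
  have p1 := part1 h L n j i z hz0
  generalize Ff q L n j (i + 1) (q * z) = x1 at *
  generalize Ff q L n j (i + 1) (q⁻¹ * z) = x2 at *
  generalize Ff q L n j i (q * z) = x3 at *
  generalize Ff q L n j i (q⁻¹ * z) = x4 at *
  generalize Ff q L n j i z = x5 at *
  generalize q ^ (-((j : ℕ) : ℤ) - (n : ℤ) - 1) + q ^ (((j : ℕ) : ℤ) + (n : ℤ) + 1) = lam at *
  generalize q ^ (2 * (i : ℕ) + 2) = u at *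
  generalize q ^ (1 - ((i : ℕ) : ℤ)) = s at *
  linear_combination (norm := (field_simp; ring)) (1 / ((1 - q ^ 2) ^ 2 * (1 - z ^ 2))) * p1

lemma fin2 {q : ℂ} (h : Gen q) (L : ℕ) (C : ℂ → ℂ → ℕ → Polynomial ℂ) (hC : IsUltra C) (n : ℕ)
    (z : ℂ) (hz0 : z ≠ 0) (hz : 1 - z ^ 2 ≠ 0) (i j : Fin (L + 1)) :
    (M2f q L z * evP q L C n ((q * z + (q * z)⁻¹) / 2) +
        M2f q L z⁻¹ * evP q L C n ((q⁻¹ * z + (q⁻¹ * z)⁻¹) / 2)) i j =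
      (evP q L C n ((z + z⁻¹) / 2) * Lam2 q L n) i j := by
  have hq := h.1
  have h2 : 1 - q ^ 2 ≠ 0 := by simpa using h.p_ne 0
  have hi : (i : ℕ) ≤ L := by omega
  have hj : (j : ℕ) ≤ L := by omega
  have ht : q ^ L ≠ 0 := pow_ne_zero _ hq
  have hb : q ^ (i : ℕ) ≠ 0 := pow_ne_zero _ hq
  have R : ∀ x y : ℂ, y ≠ 0 → (M2f q L x * evP q L C n ((y + y⁻¹) / 2)) i j =
      -(q * q ^ (i : ℕ) * (q ^ L)⁻¹ * (1 - q ^ 2 * (q ^ L) ^ 2 / (q ^ (i : ℕ)) ^ 2) /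
        (1 - q ^ 2) ^ 2 * (x / (1 - x ^ 2))) * Ffm q L n j i y +
      q * q ^ (i : ℕ) * (q ^ L)⁻¹ / (1 - q ^ 2) ^ 2 *
        ((1 - q ^ 2 * (q ^ L) ^ 2 / (q ^ (i : ℕ)) ^ 2 * x ^ 2) / (1 - x ^ 2)) * Ff q L n j i y := by
    intro x y hy
    have e1 : q ^ (1 - ((i.rev : ℕ) : ℤ)) = q * q ^ (i : ℕ) * (q ^ L)⁻¹ := by
      rw [← zpow_natCast q L, ← _root_.zpow_neg, ← pow_succ', ← zpow_natCast, ← zpow_add₀ hq,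
        Fin.val_rev]
      congr 1; omega
    have e2 : q ^ (2 * (i.rev : ℕ) + 2) = q ^ 2 * (q ^ L) ^ 2 / (q ^ (i : ℕ)) ^ 2 := by
      rw [eq_div_iff (pow_ne_zero _ hb), ← pow_mul, ← pow_mul, ← pow_add, ← pow_add, Fin.val_rev]
      congr 1; omega
    have hM : ∀ l, M2f q L x i l = if (l : ℕ) + 1 = i then
        -(q * q ^ (i : ℕ) * (q ^ L)⁻¹ * (1 - q ^ 2 * (q ^ L) ^ 2 / (q ^ (i : ℕ)) ^ 2) /
        (1 - q ^ 2) ^ 2 * (x / (1 - x ^ 2))) else if (l : ℕ) = i then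
        q * q ^ (i : ℕ) * (q ^ L)⁻¹ / (1 - q ^ 2) ^ 2 *
        ((1 - q ^ 2 * (q ^ L) ^ 2 / (q ^ (i : ℕ)) ^ 2 * x ^ 2) / (1 - x ^ 2)) else 0 := by
      intro l
      unfold M2f
      rw [JMJ]
      unfold M1f
      rw [Matrix.of_apply, e1, e2]
      have c1 : ((l.rev : ℕ) = (i.rev : ℕ) + 1) ↔ (l : ℕ) + 1 = i := by
        rw [Fin.val_rev, Fin.val_rev]; omega
      have c2 : ((l.rev : ℕ) = (i.rev : ℕ)) ↔ (l : ℕ) = i := by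
        rw [Fin.val_rev, Fin.val_rev]; omega
      simp only [c1, c2]
    rw [Matrix.mul_apply]
    simp only [evP_eq h L C hC n y hy]
    by_cases hi0 : (i : ℕ) = 0
    · rw [row_sum L (fun l => Ff q L n j l y) (fun l => M2f q L x i l) i (L + 1) _ _ hi
        (by omega) (fun hl => by rw [Ff_top _ _ _ _ hl, mul_zero])
        (fun l => by
          rw [hM]
          have c1 : ((l : ℕ) + 1 = i) ↔ (l : ℕ) = L + 1 := by omega
          simp only [c1]
          rfl)]
      simp only [Ff_top L n j (L + 1) (by omega), Ffm, hi0, if_true]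
    · rw [row_sum L (fun l => Ff q L n j l y) (fun l => M2f q L x i l) i (i - 1) _ _ hi
        (by omega) (fun hl => by omega)
        (fun l => by
          rw [hM]
          have c1 : ((l : ℕ) + 1 = i) ↔ (l : ℕ) = i - 1 := by omega
          simp only [c1]
          rfl)]
      simp only [Ffm, hi0, if_false]
  have hL : (evP q L C n ((z + z⁻¹) / 2) * Lam2 q L n) i j = Ff q L n j i z *
      ((q / (q ^ L * q ^ (n + (j : ℕ))) * ((q ^ 2) ^ (j : ℕ) +
        q ^ 2 * (q ^ L) ^ 2 * (q ^ (n + (j : ℕ))) ^ 2 / (q ^ 2) ^ (j : ℕ))) / (1 - q ^ 2) ^ 2) := by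
    have e : Lam2 q L n = Matrix.diagonal fun j : Fin (L + 1) =>
        (q ^ (-((j.rev : ℕ) : ℤ) - (n : ℤ) - 1) + q ^ (((j.rev : ℕ) : ℤ) + (n : ℤ) + 1)) /
          (q⁻¹ - q) ^ 2 := by
      ext a b
      unfold Lam2 Lam1
      rw [JMJ, Matrix.diagonal_apply, Matrix.diagonal_apply]
      simp only [Fin.rev_inj]
    rw [e, Matrix.mul_diagonal, evP_eq h L C hC n z hz0, lam_aux q hq]
    have r : ((j.rev : ℕ) : ℤ) = L - (j : ℕ) := by
      rw [Fin.val_rev]; omega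
    have e2 : q ^ (((j.rev : ℕ) : ℤ) + (n : ℤ) + 1) = q * q ^ L * q ^ n / q ^ (j : ℕ) := by
      rw [r, ← zpow_natCast q L, ← zpow_natCast q n, ← zpow_natCast q (j : ℕ), ← zpow_one_add₀ hq,
        ← zpow_add₀ hq, ← zpow_sub₀ hq]
      congr 1; ring
    have e1 : q ^ (-((j.rev : ℕ) : ℤ) - (n : ℤ) - 1) = (q * q ^ L * q ^ n / q ^ (j : ℕ))⁻¹ := by
      rw [← e2, ← _root_.zpow_neg]; congr 1; ring
    rw [e1, e2, pow_add, show (q ^ 2) ^ (j : ℕ) = (q ^ (j : ℕ)) ^ 2 by ring]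
    have hn : q ^ n ≠ 0 := pow_ne_zero _ hq
    have hjj : q ^ (j : ℕ) ≠ 0 := pow_ne_zero _ hq
    generalize q ^ n = x1 at *
    generalize q ^ (j : ℕ) = x2 at *
    generalize q ^ L = x3 at *
    field_simp
  rw [Matrix.add_apply, R _ _ (mul_ne_zero hq hz0), R _ _ (mul_ne_zero (inv_ne_zero hq) hz0), hL,
    inv_aux z hz0]
  have p2 := part2 h L n j i hj z hz0
  generalize Ffm q L n j i (q * z) = x1 at *
  generalize Ffm q L n j i (q⁻¹ * z) = x2 at *
  generalize Ff q L n j i (q * z) = x3 at *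
  generalize Ff q L n j i (q⁻¹ * z) = x4 at *
  generalize Ff q L n j i z = x5 at *
  generalize q / (q ^ L * q ^ (n + (j : ℕ))) * ((q ^ 2) ^ (j : ℕ) +
        q ^ 2 * (q ^ L) ^ 2 * (q ^ (n + (j : ℕ))) ^ 2 / (q ^ 2) ^ (j : ℕ)) = lam at *
  generalize q ^ 2 * (q ^ L) ^ 2 / (q ^ (i : ℕ)) ^ 2 = u at *
  generalize q * q ^ (i : ℕ) * (q ^ L)⁻¹ = s at *
  linear_combination (norm := (field_simp; ring)) (1 / ((1 - q ^ 2) ^ 2 * (1 - z ^ 2))) * p2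


/-- the matrix-valued Askey–Wilson type q-difference equations
`M_i(z) P_n(μ(qz)) + M_i(z⁻¹) P_n(μ(q⁻¹z)) = P_n(μ(z)) Λ_n(i)` for `i = 1, 2`. -/
theorem stmt5 (q : ℝ) (hq0 : 0 < q) (hq1 : q < 1) (L : ℕ)
    (C : ℂ → ℂ → ℕ → Polynomial ℂ) (hC : IsUltra C) (n : ℕ)
    (z : ℂ) (hz0 : z ≠ 0) (hz1 : z ≠ 1) (hz2 : z ≠ -1) :
    (M1f (q : ℂ) L z * evP (q : ℂ) L C n (((q : ℂ) * z + ((q : ℂ) * z)⁻¹) / 2) +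
        M1f (q : ℂ) L z⁻¹ *
          evP (q : ℂ) L C n (((q : ℂ)⁻¹ * z + ((q : ℂ)⁻¹ * z)⁻¹) / 2) =
      evP (q : ℂ) L C n ((z + z⁻¹) / 2) * Lam1 (q : ℂ) L n) ∧
    (M2f (q : ℂ) L z * evP (q : ℂ) L C n (((q : ℂ) * z + ((q : ℂ) * z)⁻¹) / 2) +
        M2f (q : ℂ) L z⁻¹ *
          evP (q : ℂ) L C n (((q : ℂ)⁻¹ * z + ((q : ℂ)⁻¹ * z)⁻¹) / 2) =
      evP (q : ℂ) L C n ((z + z⁻¹) / 2) * Lam2 (q : ℂ) L n) := by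
  have h : Gen (q : ℂ) := by
    refine ⟨by exact_mod_cast hq0.ne', fun m hm h1 => ?_⟩
    have h2 : q ^ m = 1 := by exact_mod_cast h1
    rcases (zpow_eq_one_iff_of_ne_zero₀ hm).1 h2 with h3 | h3
    · exact hq1.ne h3
    · linarith [h3.1]
  have hz : 1 - z ^ 2 ≠ 0 := by
    intro h0
    have : (1 - z) * (1 + z) = 0 := by linear_combination h0
    rcases mul_eq_zero.1 this with h1 | h1
    · exact hz1 (by linear_combination -h1)
    · exact hz2 (by linear_combination h1)
  constructor
  · ext i j
    exact fin1 h L C hC n z hz0 hz i j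
  · ext i j
    exact fin2 h L C hC n z hz0 hz i j

end
end

section
/- For every x ∈ [-1,1] the matrix W(x) is real symmetric and strictly positive definite. In particular the matrix-valued weight W(x)√(1-x²) is strictly positive definite for every x ∈ (-1,1). -/
open Finset Polynomial MeasureTheory Matrix
open scoped BigOperators ComplexOrder

noncomputable section

def eeC (q : ℂ) : ℕ → ℕ → ℂ
  | 0, 0 => 1
  | 0, _ + 1 => 0
  | _ + 1, 0 => 1
  | N + 1, t + 1 => eeC q N (t + 1) + q ^ (2 * N) * eeC q N t

lemma eeC_zero (q : ℂ) (N : ℕ) : eeC q N 0 = 1 := by cases N <;> rfl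

lemma eeC_big (q : ℂ) (N : ℕ) : ∀ t, N < t → eeC q N t = 0 := by
  induction N with
  | zero => intro t ht; obtain ⟨s, rfl⟩ : ∃ s, t = s + 1 := ⟨t - 1, by omega⟩; rfl
  | succ N ih =>
    intro t ht
    obtain ⟨s, rfl⟩ : ∃ s, t = s + 1 := ⟨t - 1, by omega⟩
    simp only [eeC]
    rw [ih _ (by omega), ih _ (by omega)]; ring

def qF (q : ℂ) (n : ℕ) : ℂ := qp (q ^ 2) (q ^ 2) n

lemma qF_zero (q : ℂ) : qF q 0 = 1 := by simp [qF, qp]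

lemma qF_succ (q : ℂ) (n : ℕ) : qF q (n + 1) = qF q n * (1 - q ^ (2 * n + 2)) := by
  simp only [qF, qp, Finset.prod_range_succ]
  congr 1
  ring

lemma eeC_formula (q : ℂ) (N : ℕ) : ∀ t, t ≤ N →
    eeC q N t * qF q t * qF q (N - t) * q ^ t = qF q N * q ^ (t ^ 2) := by
  induction N with
  | zero => intro t ht; obtain rfl : t = 0 := by omega
            simp [eeC, qF_zero]
  | succ N ih =>
    intro t ht
    rcases t with _ | t
    · simp [eeC, qF_zero]
    · have h1 := ih t (by omega)
      simp only [eeC]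
      by_cases h : t + 1 ≤ N
      · have h2 := ih (t + 1) h
        obtain ⟨d, rfl⟩ : ∃ d, N = t + 1 + d := ⟨N - (t + 1), by omega⟩
        have e1 : t + 1 + d - (t + 1) = d := by omega
        have e2 : t + 1 + d - t = d + 1 := by omega
        have e3 : t + 1 + d + 1 - (t + 1) = d + 1 := by omega
        rw [e1] at h2
        rw [e2] at h1
        rw [e3]
        rw [qF_succ q (t + 1 + d), qF_succ q d] at *
        rw [qF_succ q t] at *
        linear_combination (1 - q ^ (2 * d + 2)) * h2 +
          q ^ (2 * (t + 1 + d)) * q * (1 - q ^ (2 * t + 2)) * h1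
      · obtain rfl : t = N := by omega
        rw [eeC_big q t (t + 1) (by omega)]
        simp only [Nat.sub_self, qF_zero] at h1 ⊢
        rw [qF_succ q t]
        linear_combination q ^ (2 * t) * q * (1 - q ^ (2 * t + 2)) * h1

lemma qF_shift (q : ℂ) (m k : ℕ) :
    (1 - q ^ (2 * (m : ℤ) + 2)) * qp (q ^ (2 * (m : ℤ) + 4)) (q ^ 2) k * qF q m
      = qF q (m + k + 1) := by
  induction k with
  | zero =>
    rw [add_zero, qF_succ]
    simp only [qp, Finset.range_zero, Finset.prod_empty]
    have : q ^ (2 * (m : ℤ) + 2) = q ^ (2 * m + 2) := by exact_mod_cast rfl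
    rw [this]; ring
  | succ k ih =>
    rw [show m + (k + 1) + 1 = (m + k + 1) + 1 by ring, qF_succ, ← ih]
    simp only [qp, Finset.prod_range_succ]
    have : q ^ (2 * (m : ℤ) + 4) = q ^ (2 * m + 4) := by exact_mod_cast rfl
    rw [this]; ring

lemma qp_shift3 (q : ℂ) (A t : ℕ) :
    qp (q ^ (2 * (A : ℤ) + 2)) (q ^ 2) t * qF q A = qF q (A + t) := by
  induction t with
  | zero => simp [qp]
  | succ k ih =>
    rw [show A + (k + 1) = (A + k) + 1 by ring, qF_succ, ← ih]
    simp only [qp, Finset.prod_range_succ]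
    have : q ^ (2 * (A : ℤ) + 2) = q ^ (2 * A + 2) := by exact_mod_cast rfl
    rw [this]; ring

lemma qp_neg (q : ℂ) (hq : q ≠ 0) (k : ℕ) : ∀ A : ℕ, k ≤ A →
    qp (q ^ (-(2 * (A : ℤ)))) (q ^ 2) k * qF q (A - k) =
      (-1) ^ k * q ^ (-(2 * (A : ℤ)) * k + k ^ 2 - k) * qF q A := by
  induction k with
  | zero => intro A _; simp [qp]
  | succ k ih =>
    intro A hA
    have h := ih A (by omega)
    obtain ⟨d, rfl⟩ : ∃ d, A = k + 1 + d := ⟨A - (k + 1), by omega⟩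
    have e1 : k + 1 + d - (k + 1) = d := by omega
    have e2 : k + 1 + d - k = d + 1 := by omega
    rw [e2, qF_succ] at h
    rw [e1]
    have hs : qp (q ^ (-(2 * ((k + 1 + d : ℕ) : ℤ)))) (q ^ 2) (k + 1) =
      qp (q ^ (-(2 * ((k + 1 + d : ℕ) : ℤ)))) (q ^ 2) k *
        (1 - q ^ (-(2 * ((k + 1 + d : ℕ) : ℤ))) * (q ^ 2) ^ k) := by
      simp only [qp, Finset.prod_range_succ]
    have h3 : q ^ (-(2 * ((k + 1 + d : ℕ) : ℤ))) * (q ^ 2) ^ k = q ^ (-(2 * (d:ℤ) + 2)) := by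
      rw [← pow_mul, ← zpow_natCast, ← zpow_add₀ hq]; congr 1; push_cast; ring
    have h4 : (1 : ℂ) - q ^ (-(2 * (d:ℤ) + 2)) = - q ^ (-(2 * (d:ℤ) + 2)) * (1 - q ^ (2 * d + 2)) := by
      have : q ^ (-(2 * (d:ℤ) + 2)) * q ^ (2 * d + 2) = 1 := by
        rw [← zpow_natCast, ← zpow_add₀ hq]; simp
      linear_combination -this
    have h5 : q ^ (-(2 * ((k + 1 + d : ℕ) : ℤ)) * ((k + 1 : ℕ) : ℤ) + ((k + 1 : ℕ) : ℤ) ^ 2 - ((k + 1 : ℕ) : ℤ))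
       = q ^ (-(2 * ((k + 1 + d : ℕ) : ℤ)) * k + k ^ 2 - k) * q ^ (-(2 * (d:ℤ) + 2)) := by
      rw [← zpow_add₀ hq]; congr 1; push_cast; ring
    rw [hs, h3, h4, h5, pow_succ (-1 : ℂ) k]
    generalize qp (q ^ (-(2 * ((k + 1 + d : ℕ) : ℤ)))) (q ^ 2) k = Z at *
    linear_combination (-q ^ (-(2 * (d:ℤ) + 2))) * h

lemma qp_neg_zero_s9 (q : ℂ) (hq : q ≠ 0) (k A : ℕ) (h : A < k) :
    qp (q ^ (-(2 * (A : ℤ)))) (q ^ 2) k = 0 := by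
  unfold qp
  apply Finset.prod_eq_zero (Finset.mem_range.mpr h)
  rw [← pow_mul, ← zpow_natCast, ← zpow_add₀ hq]; simp

lemma alpha_formula (q : ℂ) (hq : q ≠ 0) (hF : ∀ n, qF q n ≠ 0) (L m n t : ℕ)
    (hmn : m ≤ n) (hn : n ≤ L) (ht : t ≤ n) :
    alphaC q L m n t = q ^ (-(L : ℤ)) / qF q L ^ 2 *
      ((-1) ^ m * q ^ (-(m : ℤ) ^ 2) * qF q m * qF q (L - m)) *
      ((-1) ^ n * q ^ (-(n : ℤ) ^ 2) * qF q n * qF q (L - n)) *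
      (eeC q (L + 1) t * eeC q (L + 1) (m + n + 1 - t)) := by
  have a2 := qF_shift q m (n - t)
  have a3 : qp (q ^ (2 * (L : ℤ) + 4 - 2 * (t : ℤ))) (q ^ 2) t * qF q (L + 1 - t) = qF q (L + 1) := by
    have := qp_shift3 q (L + 1 - t) t
    rw [show L + 1 - t + t = L + 1 by omega] at this
    rw [← this]
    congr 3
    push_cast [Nat.cast_sub (show t ≤ L + 1 by omega)]; ring
  have e0 : (2 * (m : ℤ) - 2 * (L : ℤ)) = -(2 * ((L - m : ℕ) : ℤ)) := by
    push_cast [Nat.cast_sub (show m ≤ L by omega)]; ring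
  have es : m + (n - t) + 1 = m + n + 1 - t := by omega
  rw [es] at a2
  have e1 : q ^ (2 * (L : ℤ) + 2) = q ^ (2 * L + 2) := by exact_mod_cast rfl
  by_cases hs : n - t ≤ L - m
  · have a4 := qp_neg q hq (n - t) (L - m) hs
    have b1 := eeC_formula q (L + 1) t (by omega)
    have b2 := eeC_formula q (L + 1) (m + n + 1 - t) (by omega)
    rw [show L + 1 - (m + n + 1 - t) = L - m - (n - t) by omega] at b2
    have c1 : eeC q (L + 1) t = qF q (L + 1) * q ^ (t ^ 2) / (qF q t * qF q (L + 1 - t) * q ^ t) := by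
      rw [eq_div_iff (by simp [hF, hq])]; linear_combination b1
    have c2 : eeC q (L + 1) (m + n + 1 - t) = qF q (L + 1) * q ^ ((m + n + 1 - t) ^ 2) / (qF q (m + n + 1 - t) * qF q (L - m - (n - t)) * q ^ (m + n + 1 - t)) := by
      rw [eq_div_iff (by simp [hF, hq])]; linear_combination b2
    have d2 : (1 - q ^ (2 * (m : ℤ) + 2)) * qp (q ^ (2 * (m : ℤ) + 4)) (q ^ 2) (n - t) = qF q (m + n + 1 - t) / qF q m := by
      rw [eq_div_iff (hF _)]; exact a2
    have d3 : qp (q ^ (2 * (L : ℤ) + 4 - 2 * (t : ℤ))) (q ^ 2) t = qF q (L + 1) / qF q (L + 1 - t) := by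
      rw [eq_div_iff (hF _)]; exact a3
    have d4 : qp (q ^ (2 * (m : ℤ) - 2 * (L : ℤ))) (q ^ 2) (n - t) = (-1) ^ (n - t) * q ^ (-(2 * ((L - m : ℕ) : ℤ)) * ((n - t : ℕ) : ℤ) + ((n - t : ℕ) : ℤ) ^ 2 - ((n - t : ℕ) : ℤ)) * qF q (L - m) / qF q (L - m - (n - t)) := by
      rw [eq_div_iff (hF _), e0]; exact a4
    have sgn : (-1 : ℂ) ^ ((m : ℤ) - (t : ℤ)) * (-1) ^ (n - t) = (-1) ^ m * (-1) ^ n := by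
      have h1 : (-1 : ℂ) ^ (n - t) = (-1) ^ n * (-1) ^ t := by
        have : (-1 : ℂ) ^ n = (-1) ^ (n - t) * (-1) ^ t := by
          rw [← pow_add]; congr 1; omega
        rw [this, mul_assoc, ← mul_pow]; simp
      have hu : ((-1 : ℂ) ^ t) ≠ 0 := pow_ne_zero _ (by norm_num)
      rw [zpow_sub₀ (by norm_num), zpow_natCast, zpow_natCast, h1]
      field_simp
    have Q : q ^ (2 * (n : ℤ) * ((L : ℤ) + 1) - (n : ℤ) ^ 2 - (2 * (L : ℤ) + 3) * (t : ℤ) + (t : ℤ) ^ 2 -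
      (L : ℤ) + (m : ℤ)) * q ^ (-(2 * ((L - m : ℕ) : ℤ)) * ((n - t : ℕ) : ℤ) + ((n - t : ℕ) : ℤ) ^ 2 - ((n - t : ℕ) : ℤ)) * (q ^ t * q ^ (m + n + 1 - t)) = q ^ (-(L : ℤ)) * q ^ (-(m : ℤ) ^ 2) * q ^ (-(n : ℤ) ^ 2) * (q ^ (t ^ 2) * q ^ ((m + n + 1 - t) ^ 2)) := by
      simp only [← zpow_natCast, ← zpow_add₀ hq]
      congr 1
      push_cast [Nat.cast_sub (show m ≤ L by omega), Nat.cast_sub ht, Nat.cast_sub (show t ≤ m + n + 1 by omega)]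
      ring
    have hL := qF_succ q L
    rw [← e1] at hL
    have g : alphaC q L m n t = (q ^ (2 * (n : ℤ) * ((L : ℤ) + 1) - (n : ℤ) ^ 2 - (2 * (L : ℤ) + 3) * (t : ℤ) + (t : ℤ) ^ 2 -
      (L : ℤ) + (m : ℤ)) * ((-1 : ℂ) ^ ((m : ℤ) - (t : ℤ)) * qp (q ^ (2 * (m : ℤ) - 2 * (L : ℤ))) (q ^ 2) (n - t)) * (1 - q ^ (2 * (L : ℤ) + 2)) *
       (qF q (L - n) * qF q n) * qp (q ^ (2 * (L : ℤ) + 4 - 2 * (t : ℤ))) (q ^ 2) t) / (((1 - q ^ (2 * (m : ℤ) + 2)) * qp (q ^ (2 * (m : ℤ) + 4)) (q ^ 2) (n - t)) * qF q L * qF q t) := by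
      simp only [alphaC, qF, div_eq_mul_inv, mul_inv]
      ring
    rw [g, d2, d3, d4, c1, c2, hL]
    have hh := hF
    have k1 := hF m
    have k2 := hF (L - m - (n - t))
    have k3 := hF t
    have k4 := hF (m + n + 1 - t)
    have k5 := hF L
    have k6 := hF (L + 1 - t)
    have k7 : q ^ t ≠ 0 := pow_ne_zero _ hq
    have k8 : q ^ (m + n + 1 - t) ≠ 0 := pow_ne_zero _ hq
    generalize q ^ (2 * (n : ℤ) * ((L : ℤ) + 1) - (n : ℤ) ^ 2 - (2 * (L : ℤ) + 3) * (t : ℤ) + (t : ℤ) ^ 2 -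
      (L : ℤ) + (m : ℤ)) = X1 at *
    generalize q ^ (-(2 * ((L - m : ℕ) : ℤ)) * ((n - t : ℕ) : ℤ) + ((n - t : ℕ) : ℤ) ^ 2 - ((n - t : ℕ) : ℤ)) = X2 at *
    generalize q ^ t = X3 at *
    generalize q ^ (m + n + 1 - t) = X4 at *
    generalize q ^ (-(L : ℤ)) = X5 at *
    generalize q ^ (-(m : ℤ) ^ 2) = X6 at *
    generalize q ^ (-(n : ℤ) ^ 2) = X7 at *
    generalize q ^ (t ^ 2) = X8 at *
    generalize q ^ ((m + n + 1 - t) ^ 2) = X9 at *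
    generalize q ^ (2 * (L : ℤ) + 2) = X10 at *
    generalize (-1 : ℂ) ^ ((m : ℤ) - (t : ℤ)) = S1 at *
    generalize (-1 : ℂ) ^ (n - t) = S2 at *
    generalize (-1 : ℂ) ^ n = S3 at *
    generalize (-1 : ℂ) ^ m = S4 at *
    clear b1 b2 c1 c2 d2 d3 d4 a2 a3 a4 g hL hh
    generalize qF q m = f1 at *
    generalize qF q (L - m - (n - t)) = f2 at *
    generalize qF q t = f3 at *
    generalize qF q (m + n + 1 - t) = f4 at *
    generalize qF q L = f5 at *
    generalize qF q (L + 1 - t) = f6 at *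
    generalize qF q (L - n) = f7 at *
    generalize qF q (L - m) = f8 at *
    generalize qF q n = f9 at *
    have key : X1 * S1 * S2 * X2 * X3 * X4 = S4 * S3 * X5 * X6 * X7 * X8 * X9 := by
      linear_combination (S1 * S2) * Q + (X5 * X6 * X7 * X8 * X9) * sgn
    field_simp
    linear_combination (1 - X10) ^ 2 * f7 * f8 * f9 * key
  · rw [eeC_big q (L + 1) (m + n + 1 - t) (by omega)]
    have z := qp_neg_zero_s9 q hq (n - t) (L - m) (by omega)
    rw [← e0] at z
    simp [alphaC, z]

lemma U_zz (z : ℂ) (hz : z ≠ 0) (k : ℤ) :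
    (z - z⁻¹) * (Polynomial.Chebyshev.U ℂ k).eval ((z + z⁻¹) / 2) =
      z ^ (k + 1) - z ^ (-(k + 1)) := by
  induction k using Polynomial.Chebyshev.induct with
  | zero => simp
  | one =>
    simp only [Polynomial.Chebyshev.U_one, eval_mul, eval_X, eval_ofNat]
    rw [show (1 : ℤ) + 1 = 2 by norm_num, _root_.zpow_neg, show z ^ (2 : ℤ) = z ^ 2 by norm_cast]
    field_simp
    ring
  | add_two n h1 h2 =>
    rw [Polynomial.Chebyshev.U_add_two]
    simp only [eval_sub, eval_mul, eval_X, eval_ofNat]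
    have e1 : z ^ ((n : ℤ) + 2 + 1) = z ^ ((n : ℤ) + 1) * z * z := by
      rw [← zpow_add_one₀ hz, ← zpow_add_one₀ hz]; ring_nf
    have e2 : z ^ ((n : ℤ) + 1 + 1) = z ^ ((n : ℤ) + 1) * z := by
      rw [← zpow_add_one₀ hz]
    have hn : z ^ ((n : ℤ) + 1) ≠ 0 := zpow_ne_zero _ hz
    rw [_root_.zpow_neg, e1]
    rw [_root_.zpow_neg] at h1 h2
    rw [e2] at h1
    generalize z ^ ((n : ℤ) + 1) = w at *
    have : (z * (w * z - (w * z)⁻¹) + z⁻¹ * (w * z - (w * z)⁻¹) - (w - w⁻¹)) = w * z * z - (w * z * z)⁻¹ := by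
      field_simp; ring
    linear_combination (z + z⁻¹) * h1 - h2 + this
  | neg_add_one n h1 h2 =>
    have := Polynomial.Chebyshev.U_sub_one ℂ (-(n : ℤ))
    rw [this]
    simp only [eval_sub, eval_mul, eval_X, eval_ofNat]
    have e1 : z ^ (-(n : ℤ) + 1) = z ^ (-(n : ℤ) - 1 + 1) * z := by
      rw [← zpow_add_one₀ hz]; congr 1; ring
    have e2 : z ^ (-(n : ℤ) + 1 + 1) = z ^ (-(n : ℤ) - 1 + 1) * z * z := by
      rw [← zpow_add_one₀ hz, ← zpow_add_one₀ hz]; congr 1; ring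
    have hn : z ^ (-(n : ℤ) - 1 + 1) ≠ 0 := zpow_ne_zero _ hz
    rw [_root_.zpow_neg]
    rw [_root_.zpow_neg] at h1 h2
    rw [e1] at h1
    rw [e2] at h2
    generalize z ^ (-(n : ℤ) - 1 + 1) = w at *
    have : (z * (w * z - (w * z)⁻¹) + z⁻¹ * (w * z - (w * z)⁻¹) - (w * z * z - (w * z * z)⁻¹)) = w - w⁻¹ := by
      field_simp; ring
    linear_combination (z + z⁻¹) * h1 - h2 + this

def lfp (a z : ℂ) : Polynomial ℂ := 1 + Polynomial.C (a * z) * Polynomial.X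

def hpol (q z : ℂ) (N i : ℕ) : Polynomial ℂ :=
  (∏ j ∈ Finset.range i, lfp (q ^ (2 * j)) z⁻¹) * ∏ j ∈ Finset.Ico (i + 1) N, lfp (q ^ (2 * j)) z

def Apol (q z : ℂ) (N i : ℕ) : Polynomial ℂ :=
  (∏ j ∈ Finset.range i, lfp (q ^ (2 * j)) z⁻¹) * ∏ j ∈ Finset.Ico i N, lfp (q ^ (2 * j)) z

lemma Apol_lo (q z : ℂ) (N i : ℕ) (h : i < N) :
    Apol q z N i = lfp (q ^ (2 * i)) z * hpol q z N i := by
  unfold Apol hpol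
  rw [Finset.prod_eq_prod_Ico_succ_bot h]; ring

lemma Apol_hi (q z : ℂ) (N i : ℕ) :
    Apol q z N (i + 1) = lfp (q ^ (2 * i)) z⁻¹ * hpol q z N i := by
  unfold Apol hpol
  rw [Finset.prod_range_succ]; ring

lemma lfp_coeff (a z : ℂ) (h : Polynomial ℂ) (m : ℕ) :
    (lfp a z * h).coeff m = h.coeff m + a * z * (Polynomial.X * h).coeff m := by
  unfold lfp
  rw [add_mul, one_mul, mul_assoc, coeff_add, coeff_C_mul]

lemma prod_lfp_coeff (q z : ℂ) (N : ℕ) : ∀ t,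
    (∏ j ∈ Finset.range N, lfp (q ^ (2 * j)) z).coeff t = eeC q N t * z ^ t := by
  induction N with
  | zero =>
    intro t
    cases t with
    | zero => simp [eeC]
    | succ t => simp [eeC, coeff_one]
  | succ N ih =>
    intro t
    rw [Finset.prod_range_succ, mul_comm, lfp_coeff, ih]
    cases t with
    | zero => simp [eeC, eeC_zero]
    | succ t => rw [coeff_X_mul, ih]; simp only [eeC]; ring

def GG (q z : ℂ) (N m n : ℕ) : ℂ :=
  ∑ i ∈ Finset.range N, q ^ (2 * i) * (hpol q z N i).coeff m * (hpol q z⁻¹ N i).coeff n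

lemma tele (q z : ℂ) (N m n : ℕ) :
    (z - z⁻¹) * ∑ i ∈ Finset.range N, q ^ (2 * i) *
      ((Polynomial.X * hpol q z N i).coeff m * (hpol q z⁻¹ N i).coeff n -
        (hpol q z N i).coeff m * (Polynomial.X * hpol q z⁻¹ N i).coeff n) =
    eeC q N m * z ^ m * (eeC q N n * z⁻¹ ^ n) - eeC q N m * z⁻¹ ^ m * (eeC q N n * z ^ n) := by
  have h0 : ∀ w : ℂ, Apol q w N 0 = ∏ j ∈ Finset.range N, lfp (q ^ (2 * j)) w := by
    intro w; rw [Apol, Finset.range_zero, Finset.prod_empty, one_mul, Finset.range_eq_Ico]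
  have hN : ∀ w : ℂ, Apol q w N N = ∏ j ∈ Finset.range N, lfp (q ^ (2 * j)) w⁻¹ := by
    intro w; simp [Apol]
  have := Finset.sum_range_sub' (fun i => (Apol q z N i).coeff m * (Apol q z⁻¹ N i).coeff n) N
  rw [h0, h0, hN, hN, inv_inv, prod_lfp_coeff, prod_lfp_coeff, prod_lfp_coeff, prod_lfp_coeff] at this
  rw [← this, Finset.mul_sum]
  apply Finset.sum_congr rfl
  intro i hi
  rw [Apol_lo _ _ _ _ (Finset.mem_range.mp hi), Apol_lo _ _ _ _ (Finset.mem_range.mp hi),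
    Apol_hi, Apol_hi, inv_inv]
  simp only [lfp_coeff]
  ring

lemma GG_sum (q z : ℂ) (N n : ℕ) : ∀ m,
    (z - z⁻¹) * GG q z N m n = ∑ t ∈ Finset.range (n + 1),
      eeC q N t * eeC q N (m + n + 1 - t) * (z ^ (m + n + 1 - t) * z⁻¹ ^ t - z⁻¹ ^ (m + n + 1 - t) * z ^ t) := by
  induction n with
  | zero =>
    intro m
    have := tele q z N (m + 1) 0
    simp only [coeff_X_mul, mul_coeff_zero, coeff_X_zero, zero_mul, mul_zero, sub_zero] at this
    simp only [GG, mul_assoc, zero_add, Finset.sum_range_one, add_zero, Nat.sub_zero]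
    rw [this]; ring
  | succ n ih =>
    intro m
    have h := tele q z N (m + 1) (n + 1)
    simp only [coeff_X_mul, mul_sub, Finset.sum_sub_distrib] at h
    have h2 := ih (m + 1)
    rw [Finset.sum_range_succ, show m + (n + 1) + 1 = m + 1 + n + 1 by ring, ← h2,
      show m + 1 + n + 1 - (n + 1) = m + 1 by omega]
    simp only [GG, mul_assoc] at h ⊢
    linear_combination h

def SU (q z : ℂ) (N m n : ℕ) : ℂ := ∑ t ∈ Finset.range (n + 1),
  eeC q N t * eeC q N (m + n + 1 - t) *
    (Polynomial.Chebyshev.U ℂ ((m : ℤ) + n - 2 * t)).eval ((z + z⁻¹) / 2)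

lemma GG_SU_mul (q z : ℂ) (hz : z ≠ 0) (N m n : ℕ) :
    (z - z⁻¹) * GG q z N m n = (z - z⁻¹) * SU q z N m n := by
  rw [GG_sum, SU, Finset.mul_sum]
  apply Finset.sum_congr rfl
  intro t ht
  have ht' : t ≤ m + n + 1 := by have := Finset.mem_range.mp ht; omega
  have := U_zz z hz ((m : ℤ) + n - 2 * t)
  have e1 : z ^ ((m : ℤ) + n - 2 * t + 1) = z ^ (m + n + 1 - t) * z⁻¹ ^ t := by
    rw [inv_pow, ← zpow_natCast, ← zpow_natCast, ← _root_.zpow_neg, ← zpow_add₀ hz]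
    congr 1; push_cast [Nat.cast_sub ht']; ring
  have e2 : z ^ (-((m : ℤ) + n - 2 * t + 1)) = z⁻¹ ^ (m + n + 1 - t) * z ^ t := by
    rw [inv_pow, ← zpow_natCast, ← zpow_natCast, ← _root_.zpow_neg, ← zpow_add₀ hz]
    congr 1; push_cast [Nat.cast_sub ht']; ring
  rw [e1, e2] at this
  rw [← this]; ring

lemma coeff_cont {f g : ℂ → Polynomial ℂ} {z₀ : ℂ}
    (hf : ∀ m, ContinuousAt (fun z => (f z).coeff m) z₀)
    (hg : ∀ m, ContinuousAt (fun z => (g z).coeff m) z₀) (m : ℕ) :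
    ContinuousAt (fun z => (f z * g z).coeff m) z₀ := by
  simp only [coeff_mul]
  exact tendsto_finsetSum _ fun p _ => (hf p.1).mul (hg p.2)

lemma coeff_cont_prod (s : Finset ℕ) {f : ℕ → ℂ → Polynomial ℂ} {z₀ : ℂ}
    (hf : ∀ j m, ContinuousAt (fun z => (f j z).coeff m) z₀) : ∀ m,
    ContinuousAt (fun z => (∏ j ∈ s, f j z).coeff m) z₀ := by
  induction s using Finset.induction_on with
  | empty => intro m; simp only [Finset.prod_empty]; exact continuousAt_const
  | insert a s ha ih =>
    intro m
    simp only [Finset.prod_insert ha]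
    exact coeff_cont (hf a) ih m

lemma lfp_cont (a : ℂ) {φ : ℂ → ℂ} {z₀ : ℂ} (h : ContinuousAt φ z₀) (m : ℕ) :
    ContinuousAt (fun z => (lfp a (φ z)).coeff m) z₀ := by
  simp only [lfp, coeff_add, coeff_C_mul]
  fun_prop

lemma hpol_cont (q : ℂ) (N i m : ℕ) {φ : ℂ → ℂ} {z₀ : ℂ} (h : ContinuousAt φ z₀) (h0 : φ z₀ ≠ 0) :
    ContinuousAt (fun z => (hpol q (φ z) N i).coeff m) z₀ := by
  unfold hpol
  exact coeff_cont (coeff_cont_prod _ fun j m => lfp_cont _ (h.inv₀ h0) m)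
    (coeff_cont_prod _ fun j m => lfp_cont _ h m) m

lemma GG_SU (q z₀ : ℂ) (hz : z₀ ≠ 0) (N m n : ℕ) : GG q z₀ N m n = SU q z₀ N m n := by
  have hi : ContinuousAt (fun z : ℂ => z⁻¹) z₀ := continuousAt_inv₀ hz
  have hG : ContinuousAt (fun z => GG q z N m n) z₀ := by
    unfold GG
    refine tendsto_finsetSum _ fun i _ => ?_
    exact (continuousAt_const.mul (hpol_cont q N i m continuousAt_id hz)).mul
      (hpol_cont q N i n hi (inv_ne_zero hz))
  have hS : ContinuousAt (fun z => SU q z N m n) z₀ := by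
    unfold SU
    refine tendsto_finsetSum _ fun i _ => ?_
    refine continuousAt_const.mul ?_
    exact (Polynomial.continuous _).continuousAt.comp ((continuousAt_id.add hi).div_const 2)
  have hev : ∀ᶠ z in nhdsWithin z₀ {z₀}ᶜ, GG q z N m n = SU q z N m n := by
    have hfin : ∀ᶠ z in nhdsWithin z₀ {z₀}ᶜ, z ∉ (({0, 1, -1} : Set ℂ) \ {z₀}) := by
      apply mem_nhdsWithin_of_mem_nhds
      apply IsOpen.mem_nhds
      · exact ((Set.toFinite _).isClosed).isOpen_compl
      · simp
    filter_upwards [hfin, self_mem_nhdsWithin] with z h1 h2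
    have h3 : z ∉ ({0, 1, -1} : Set ℂ) := fun h => h1 ⟨h, h2⟩
    simp only [Set.mem_insert_iff, Set.mem_singleton_iff, not_or] at h3
    have h4 : z - z⁻¹ ≠ 0 := by
      intro h
      have : z * z = 1 := by
        have h5 := h3.1
        field_simp at h
        linear_combination h
      rcases mul_self_eq_one_iff.mp this with h | h
      · exact h3.2.1 h
      · exact h3.2.2 h
    exact mul_left_cancel₀ h4 (GG_SU_mul q z h3.1 N m n)
  exact tendsto_nhds_unique_of_eventuallyEq (hG.tendsto.mono_left nhdsWithin_le_nhds)
    (hS.tendsto.mono_left nhdsWithin_le_nhds) hev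

lemma GG_symm (q z : ℂ) (hz : z ≠ 0) (N m n : ℕ) : GG q z N m n = GG q z N n m := by
  have h1 : GG q z N n m = GG q z⁻¹ N m n := by
    unfold GG; rw [inv_inv]; apply Finset.sum_congr rfl; intros; ring
  rw [h1, GG_SU q z hz, GG_SU q z⁻¹ (inv_ne_zero hz)]
  unfold SU
  rw [inv_inv, add_comm z z⁻¹]

lemma hpol_conj (q : ℝ) (z : ℂ) (hz : (starRingEnd ℂ) z = z⁻¹) (N i m : ℕ) :
    (starRingEnd ℂ) ((hpol (q : ℂ) z N i).coeff m) = (hpol (q : ℂ) z⁻¹ N i).coeff m := by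
  rw [← coeff_map]
  congr 1
  simp [hpol, lfp, Polynomial.map_mul, Polynomial.map_prod, hz]

lemma hpol_deg (q z : ℂ) (L i : ℕ) (hi : i < L + 1) : (hpol q z (L + 1) i).natDegree < L + 1 := by
  have h1 : ∀ a w : ℂ, (lfp a w).natDegree ≤ 1 := by
    intro a w
    unfold lfp
    compute_degree
  have h2 : ∀ (s : Finset ℕ) (w : ℂ), (∏ j ∈ s, lfp (q ^ (2 * j)) w).natDegree ≤ s.card := by
    intro s w
    refine (natDegree_prod_le _ _).trans ?_
    refine (Finset.sum_le_sum fun j _ => h1 _ _).trans ?_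
    simp
  unfold hpol
  have := natDegree_mul_le (p := ∏ j ∈ Finset.range i, lfp (q ^ (2 * j)) z⁻¹)
    (q := ∏ j ∈ Finset.Ico (i + 1) (L + 1), lfp (q ^ (2 * j)) z)
  have a := h2 (Finset.range i) z⁻¹
  have b := h2 (Finset.Ico (i + 1) (L + 1)) z
  simp only [Finset.card_range, Nat.card_Ico] at a b
  omega

lemma Hdet (q : ℝ) (hq0 : 0 < q) (hq1 : q < 1) (L : ℕ) (z : ℂ) (hz : ‖z‖ = 1) :
    (Matrix.of fun i m : Fin (L + 1) => (hpol (q : ℂ) z (L + 1) i).coeff (m : ℕ)).det ≠ 0 := by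
  have hz0 : z ≠ 0 := by rintro rfl; simp at hz
  have hqc : (q : ℂ) ≠ 0 := by exact_mod_cast hq0.ne'
  set H := (Matrix.of fun i m : Fin (L + 1) => (hpol (q : ℂ) z (L + 1) i).coeff (m : ℕ)) with hH
  let y : ℕ → ℂ := fun k => -z / (q : ℂ) ^ (2 * k)
  let V : Matrix (Fin (L + 1)) (Fin (L + 1)) ℂ := Matrix.of fun m k => y k ^ (m : ℕ)
  have hHV : ∀ i k, (H * V) i k = (hpol (q : ℂ) z (L + 1) i).eval (y k) := by
    intro i k
    rw [Matrix.mul_apply, eval_eq_sum_range' (hpol_deg _ _ _ _ i.2), ← Fin.sum_univ_eq_sum_range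
      (fun m => (hpol (q : ℂ) z (L + 1) i).coeff m * y k ^ m)]
    rfl
  have hfac : ∀ j k : ℕ, j ≠ k → ∀ u : ℂ, ‖u‖ = 1 →
      (1 : ℂ) + (q : ℂ) ^ (2 * j) * u * y k ≠ 0 := by
    intro j k hjk u hu h
    have e : (q : ℂ) ^ (2 * j) * u * z = (q : ℂ) ^ (2 * k) := by
      have hk : (q : ℂ) ^ (2 * k) ≠ 0 := pow_ne_zero _ hqc
      simp only [y] at h
      field_simp at h
      linear_combination -h
    have e2 := congrArg norm e
    simp only [norm_mul, norm_pow, hu, hz, mul_one, Complex.norm_real, Real.norm_eq_abs, abs_of_pos hq0] at e2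
    have := (pow_right_strictAnti₀ hq0 hq1).injective e2
    omega
  have htri : (H * V).IsUpperTriangular := by
    intro i k hik
    have hik' : (k : ℕ) < i := hik
    rw [hHV]
    unfold hpol
    rw [eval_mul, eval_prod, Finset.prod_eq_zero (Finset.mem_range.mpr hik'), zero_mul]
    have hk : (q : ℂ) ^ (2 * (k : ℕ)) ≠ 0 := pow_ne_zero _ hqc
    simp only [lfp, eval_add, eval_one, eval_mul, eval_C, eval_X, y]
    field_simp
    ring
  have hdet : (H * V).det ≠ 0 := by
    rw [Matrix.det_of_isUpperTriangular htri]
    refine Finset.prod_ne_zero_iff.mpr fun i _ => ?_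
    rw [hHV]
    unfold hpol
    rw [eval_mul, eval_prod, eval_prod]
    refine mul_ne_zero (Finset.prod_ne_zero_iff.mpr fun j hj => ?_)
      (Finset.prod_ne_zero_iff.mpr fun j hj => ?_)
    · have := Finset.mem_range.mp hj
      simp only [lfp, eval_add, eval_one, eval_mul, eval_C, eval_X]
      exact hfac j i (by omega) _ (by simp [hz])
    · have := Finset.mem_Ico.mp hj
      simp only [lfp, eval_add, eval_one, eval_mul, eval_C, eval_X]
      exact hfac j i (by omega) _ hz
  rw [Matrix.det_mul] at hdet
  exact left_ne_zero_of_mul hdet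

lemma qF_pos (q : ℝ) (hq0 : 0 < q) (hq1 : q < 1) (n : ℕ) : ∃ r : ℝ, 0 < r ∧ qF (q : ℂ) n = (r : ℂ) := by
  refine ⟨∏ j ∈ Finset.range n, (1 - q ^ 2 * (q ^ 2) ^ j), Finset.prod_pos fun j _ => ?_, ?_⟩
  · rw [← pow_succ', ← pow_mul]
    have := pow_lt_one₀ hq0.le hq1 (show 2 * (j + 1) ≠ 0 by omega)
    linarith
  · simp [qF, qp]

lemma W_entry (q : ℝ) (hq0 : 0 < q) (hq1 : q < 1) (L : ℕ) (x : ℝ) (hx0 : -1 ≤ x) (hx1 : x ≤ 1) :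
    (Wm (q : ℂ) L (x : ℂ)).PosDef := by
  have hqc : (q : ℂ) ≠ 0 := by exact_mod_cast hq0.ne'
  choose r hr hF using qF_pos q hq0 hq1
  have hFne : ∀ n, qF (q : ℂ) n ≠ 0 := fun n => by rw [hF]; exact_mod_cast (hr n).ne'
  set z : ℂ := Complex.exp (Real.arccos x * Complex.I) with hzdef
  have hzn : ‖z‖ = 1 := Complex.norm_exp_ofReal_mul_I _
  have hz0 : z ≠ 0 := Complex.exp_ne_zero _
  have hconj : (starRingEnd ℂ) z = z⁻¹ := by
    rw [Complex.inv_def, Complex.normSq_eq_norm_sq, hzn]; simp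
  have hxz : (z + z⁻¹) / 2 = (x : ℂ) := by
    rw [hzdef, ← Complex.exp_neg, ← neg_mul, ← Complex.cos, ← Complex.ofReal_cos,
      Real.cos_arccos hx0 hx1]
  let d : ℕ → ℝ := fun m => (-1) ^ m * q ^ (-(m : ℤ) ^ 2) * r m * r (L - m)
  have hd : ∀ m, d m ≠ 0 := fun m => by
    have h1 := (hr m).ne'
    have h2 := (hr (L - m)).ne'
    have h3 : q ^ (-(m : ℤ) ^ 2) ≠ 0 := zpow_ne_zero _ hq0.ne'
    have h4 : (-1 : ℝ) ^ m ≠ 0 := pow_ne_zero _ (by norm_num)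
    simp only [d]
    exact mul_ne_zero (mul_ne_zero (mul_ne_zero h4 h3) h1) h2
  let K : ℝ := q ^ (-(L : ℤ)) / r L ^ 2
  have hK : 0 < K := div_pos (zpow_pos hq0 _) (pow_pos (hr L) 2)
  have ent : ∀ m n : ℕ, m ≤ n → n ≤ L →
      ∑ t ∈ Finset.range (n + 1), alphaC (q : ℂ) L m n t *
        (Polynomial.Chebyshev.U ℂ ((m : ℤ) + (n : ℤ) - 2 * (t : ℤ))).eval (x : ℂ) =
      (K : ℂ) * d m * d n * GG (q : ℂ) z (L + 1) m n := by
    intro m n hmn hn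
    rw [GG_SU _ _ hz0, SU, hxz, Finset.mul_sum]
    apply Finset.sum_congr rfl
    intro t ht
    rw [alpha_formula (q : ℂ) hqc hFne L m n t hmn hn (by have := Finset.mem_range.mp ht; omega)]
    simp only [hF, K, d]
    push_cast
    ring
  have ent2 : ∀ i j : Fin (L + 1), Wm (q : ℂ) L (x : ℂ) i j =
      (K : ℂ) * d i * d j * GG (q : ℂ) z (L + 1) i j := by
    intro i j
    rcases le_total (i : ℕ) (j : ℕ) with h | h
    · rw [← ent i j h (by omega)]
      have h' : ((i : ℕ) : ℤ) ≤ ((j : ℕ) : ℤ) := by exact_mod_cast h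
      simp only [Wm, Matrix.of_apply, min_eq_left h, max_eq_right h, min_eq_left h', max_eq_right h']
    · have e := ent j i h (by omega)
      rw [GG_symm _ _ hz0] at e
      have h' : ((j : ℕ) : ℤ) ≤ ((i : ℕ) : ℤ) := by exact_mod_cast h
      simp only [Wm, Matrix.of_apply, min_eq_right h, max_eq_left h, min_eq_right h', max_eq_left h']
      rw [e]; ring
  let H : Matrix (Fin (L + 1)) (Fin (L + 1)) ℂ :=
    Matrix.of fun i m => (hpol (q : ℂ) z⁻¹ (L + 1) i).coeff (m : ℕ)
  let M : Matrix (Fin (L + 1)) (Fin (L + 1)) ℂ := H * Matrix.diagonal fun m : Fin (L + 1) => (d m : ℂ)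
  let A : Matrix (Fin (L + 1)) (Fin (L + 1)) ℂ :=
    Matrix.diagonal fun i => ((K * q ^ (2 * (i : ℕ)) : ℝ) : ℂ)
  have hA : A.PosDef := by
    refine Matrix.PosDef.diagonal fun i => ?_
    have : 0 < K * q ^ (2 * (i : ℕ)) := mul_pos hK (pow_pos hq0 _)
    exact_mod_cast this
  have hM : Function.Injective M.mulVec := by
    rw [Matrix.mulVec_injective_iff_isUnit, Matrix.isUnit_iff_isUnit_det, isUnit_iff_ne_zero]
    simp only [M]
    rw [Matrix.det_mul, Matrix.det_diagonal]
    refine mul_ne_zero (Hdet q hq0 hq1 L z⁻¹ (by simp [hzn])) ?_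
    exact Finset.prod_ne_zero_iff.mpr fun m _ => by exact_mod_cast hd m
  have hconj' : (starRingEnd ℂ) z⁻¹ = z⁻¹⁻¹ := by rw [map_inv₀, hconj]
  have hW : Wm (q : ℂ) L (x : ℂ) = Mᴴ * A * M := by
    ext i j
    rw [ent2, Matrix.mul_apply, GG, ← Fin.sum_univ_eq_sum_range (fun k => (q : ℂ) ^ (2 * k) *
      (hpol (q : ℂ) z (L + 1) k).coeff i * (hpol (q : ℂ) z⁻¹ (L + 1) k).coeff j), Finset.mul_sum]
    apply Finset.sum_congr rfl
    intro k _
    simp only [A, Matrix.mul_diagonal, Matrix.conjTranspose_apply, M, H, Matrix.of_apply]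
    rw [star_mul', ← starRingEnd_apply, ← starRingEnd_apply, hpol_conj q _ hconj', inv_inv,
      Complex.conj_ofReal]
    push_cast
    ring
  rw [hW]
  exact hA.conjTranspose_mul_mul_same hM

/-- for every `x ∈ [-1,1]` the matrix `W(x)` is real, symmetric and
strictly positive definite; in particular `W(x)√(1-x²)` is strictly positive definite
for every `x ∈ (-1,1)`. -/
theorem stmt9 (q : ℝ) (hq0 : 0 < q) (hq1 : q < 1) (L : ℕ) :
    (∀ x : ℝ, -1 ≤ x → x ≤ 1 →
        (∀ i j : Fin (L + 1), (Wm (q : ℂ) L (x : ℂ) i j).im = 0) ∧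
          (Wm (q : ℂ) L (x : ℂ))ᵀ = Wm (q : ℂ) L (x : ℂ) ∧
          (Wm (q : ℂ) L (x : ℂ)).PosDef) ∧
      ∀ x : ℝ, -1 < x → x < 1 →
        (((Real.sqrt (1 - x ^ 2) : ℝ) : ℂ) • Wm (q : ℂ) L (x : ℂ)).PosDef := by
  have hsym : ∀ x : ℂ, (Wm (q : ℂ) L x)ᵀ = Wm (q : ℂ) L x := by
    intro x
    ext i j
    simp only [Wm, Matrix.transpose_apply, Matrix.of_apply]
    rw [min_comm (j : ℕ) (i : ℕ), max_comm (j : ℕ) (i : ℕ),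
      min_comm ((j : ℕ) : ℤ) ((i : ℕ) : ℤ), max_comm ((j : ℕ) : ℤ) ((i : ℕ) : ℤ)]
  refine ⟨fun x h0 h1 => ?_, fun x h0 h1 => ?_⟩
  · have hP := W_entry q hq0 hq1 L x h0 h1
    refine ⟨fun i j => ?_, hsym _, hP⟩
    have e1 := hP.1.apply i j
    have e2 : Wm (q : ℂ) L (x : ℂ) j i = Wm (q : ℂ) L (x : ℂ) i j :=
      congrFun (congrFun (hsym (x : ℂ)) i) j
    rw [e2] at e1
    exact Complex.conj_eq_iff_im.mp e1
  · refine (W_entry q hq0 hq1 L x h0.le h1.le).smul ?_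
    have : 0 < Real.sqrt (1 - x ^ 2) := Real.sqrt_pos.mpr (by nlinarith)
    exact_mod_cast this

end
end
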